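/- Let Ω ⊂ ℝ² be a bounded, open, connected set with Lipschitz boundary and let u ∈ W^{1,1}(Ω;S¹). Then for every ε > 0 there exists a finite set C_ε ⊂ Ω such that 𝒜(u, Ω ∖ C_ε) ≤ ∫_Ω √(1 + |∇u|²) dx + ε, where |∇u| is the Frobenius norm of the weak gradient of u. -/

import Mathlib

open MeasureTheory Metric Filter Set
open scoped ENNReal NNReal Topology Classical

noncomputable section

abbrev R2 := EuclideanSpace ℝ (Fin 2)

/-- `Ω ⊂ ℝ²` has Lipschitz boundary: near every boundary point, after a rigid motion,
`Ω` coincides with the open region strictly above the graph of a Lipschitz function. -/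
def HasLipschitzBoundary (Ω : Set R2) : Prop :=
  ∀ p ∈ frontier Ω, ∃ r : ℝ, 0 < r ∧ ∃ (f : R2 ≃ᵢ R2) (γ : ℝ → ℝ) (L : ℝ≥0),
    LipschitzWith L γ ∧ ∀ x ∈ Metric.ball p r, (x ∈ Ω ↔ γ (f x 0) < f x 1)

/-- `G` is the weak (distributional) gradient of `u` on `Ω`:
`∫_Ω u_i ∂_j φ = -∫_Ω G_{ij} φ` for all test functions `φ ∈ C_c^∞(Ω)`. -/
def IsWeakGradient (Ω : Set R2) (u : R2 → R2) (G : R2 → Matrix (Fin 2) (Fin 2) ℝ) : Prop :=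
  ∀ φ : R2 → ℝ, ContDiff ℝ (⊤ : ℕ∞) φ → HasCompactSupport φ → tsupport φ ⊆ Ω →
    ∀ i j : Fin 2,
      (∫ x in Ω, u x i * fderiv ℝ φ x (EuclideanSpace.single j 1)) =
        - ∫ x in Ω, G x i j * φ x

/-- `u ∈ W^{1,1}(Ω;ℝ²)` with weak gradient `G`. -/
def MemW11 (Ω : Set R2) (u : R2 → R2) (G : R2 → Matrix (Fin 2) (Fin 2) ℝ) : Prop :=
  IntegrableOn u Ω ∧ (∀ i j : Fin 2, IntegrableOn (fun x => G x i j) Ω) ∧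
    IsWeakGradient Ω u G

/-- `|u| = 1` a.e. in `Ω`. -/
def SphereValued (Ω : Set R2) (u : R2 → R2) : Prop :=
  ∀ᵐ x ∂(volume.restrict Ω), ‖u x‖ = 1

/-- Frobenius norm of a `2×2` matrix. -/
def frob (M : Matrix (Fin 2) (Fin 2) ℝ) : ℝ :=
  Real.sqrt (∑ i, ∑ j, (M i j) ^ 2)

/-- Jacobian matrix of a map `v : ℝ² → ℝ²`. -/
def jacobianMatrix (v : R2 → R2) (x : R2) : Matrix (Fin 2) (Fin 2) ℝ :=
  Matrix.of fun i j => fderiv ℝ v x (EuclideanSpace.single j 1) i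

/-- Classical graph area `A(v,A) = ∫_A √(1 + |∇v|² + (Jv)²)` of a `C¹` map. -/
def classicalArea (A : Set R2) (v : R2 → R2) : ℝ≥0∞ :=
  ∫⁻ x in A, ENNReal.ofReal
    (Real.sqrt (1 + (∑ i, ∑ j, (jacobianMatrix v x i j) ^ 2) + (jacobianMatrix v x).det ^ 2))

/-- `L¹`-relaxed area functional `𝒜(u,A)`. -/
def relaxedArea (u : R2 → R2) (A : Set R2) : ℝ≥0∞ :=
  sInf { a : ℝ≥0∞ | ∃ v : ℕ → R2 → R2,
    (∀ k, ContDiffOn ℝ 1 (v k) A) ∧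
    (∀ k, IntegrableOn (fun x => v k x - u x) A) ∧
    Tendsto (fun k => ∫ x in A, ‖v k x - u x‖) atTop (nhds 0) ∧
    a = Filter.liminf (fun k => classicalArea A (v k)) atTop }

/-- `λ_u = (1/2)(u₁ ∇^⊥u₂ − u₂ ∇^⊥u₁)`, computed from the weak gradient `G`. -/
def lambdaVec (u : R2 → R2) (G : R2 → Matrix (Fin 2) (Fin 2) ℝ) (x : R2) : Fin 2 → ℝ :=
  ![ (1 / 2) * (-(u x 0) * G x 1 1 + u x 1 * G x 0 1),
     (1 / 2) * (u x 0 * G x 1 0 - u x 1 * G x 0 0) ]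

/-- Distributional Jacobian pairing `⟨Det(∇u), φ⟩ = ∫_Ω λ_u · ∇φ`. -/
def detPairing (Ω : Set R2) (u : R2 → R2) (G : R2 → Matrix (Fin 2) (Fin 2) ℝ)
    (φ : R2 → ℝ) : ℝ :=
  ∫ x in Ω, ∑ j, lambdaVec u G x j * fderiv ℝ φ x (EuclideanSpace.single j 1)

/-- `φ ∈ Lip₀(Ω)`: Lipschitz on `cl(Ω)` and vanishing on `∂Ω`. -/
def MemLip0 (Ω : Set R2) (φ : R2 → ℝ) : Prop :=
  (∃ L : ℝ≥0, LipschitzOnWith L φ (closure Ω)) ∧ ∀ p ∈ frontier Ω, φ p = 0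

/-- Admissible test functions for the flat norm: Lipschitz constant `≤ L` on `cl(Ω)`,
vanishing on `Z`, and bounded by `1` on `cl(Ω)`. -/
def FlatAdmissible (Ω Z : Set R2) (L : ℝ≥0) (φ : R2 → ℝ) : Prop :=
  LipschitzOnWith L φ (closure Ω) ∧ (∀ p ∈ Z, φ p = 0) ∧ ∀ p ∈ closure Ω, |φ p| ≤ 1

/-- Flat norm of a functional `F`, with vanishing condition on the set `Z`. -/
def flatNormOn (Ω Z : Set R2) (L : ℝ≥0) (F : (R2 → ℝ) → ℝ) : ℝ≥0∞ :=
  ⨆ φ ∈ {φ : R2 → ℝ | FlatAdmissible Ω Z L φ}, ENNReal.ofReal (F φ)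

/-- Flat norm of a functional `F` on `Lip₀(Ω)`; `L = 2` gives `‖·‖_{flat,α}` (α = 1/2),
`L = 1` gives `‖·‖_flat`. -/
def flatNorm (Ω : Set R2) (L : ℝ≥0) (F : (R2 → ℝ) → ℝ) : ℝ≥0∞ :=
  flatNormOn Ω (frontier Ω) L F

/-- `d̄_Ω(x,y) = min{|x−y|, dist(x,∂Ω) + dist(y,∂Ω)}`. -/
def dbar (Ω : Set R2) (x y : R2) : ℝ :=
  min (dist x y) (Metric.infDist x (frontier Ω) + Metric.infDist y (frontier Ω))

/-- Countably subadditive interior envelope `𝒜**(u,V)` (relative to `Ω`). -/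
def envA (u : R2 → R2) (Ω V : Set R2) : ℝ≥0∞ :=
  sInf { a : ℝ≥0∞ | ∃ A : ℕ → Set R2,
    (∀ k, IsOpen (A k) ∧ A k ⊆ Ω) ∧ V ⊆ ⋃ k, A k ∧ a = ∑' k, relaxedArea u (A k) }

/-- Property `(P_f)` for a finite family of pairs of points of `cl(Ω)`. -/
def SatisfiesPf (Ω : Set R2) {n : ℕ} (x y : Fin n → R2) : Prop :=
  (∀ k, (x k ∈ Ω ∧ y k ∈ frontier Ω ∧ dist (x k) (y k) = Metric.infDist (x k) (frontier Ω)) ∨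
        (y k ∈ Ω ∧ x k ∈ frontier Ω ∧ dist (x k) (y k) = Metric.infDist (y k) (frontier Ω))) ∧
  ∀ i j, x i ∈ Ω → y j ∈ Ω → x i ≠ y j

/-- The points of the family `x, y` lying in `Ω` are distinct and three by three
not collinear. -/
def InteriorPointsGeneric (Ω : Set R2) {n : ℕ} (x y : Fin n → R2) : Prop :=
  (∀ a b : Fin n ⊕ Fin n, Sum.elim x y a ∈ Ω → Sum.elim x y b ∈ Ω → a ≠ b →
    Sum.elim x y a ≠ Sum.elim x y b) ∧
  ∀ a b c : Fin n ⊕ Fin n, Sum.elim x y a ∈ Ω → Sum.elim x y b ∈ Ω → Sum.elim x y c ∈ Ω →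
    a ≠ b → a ≠ c → b ≠ c →
    ¬ Collinear ℝ ({Sum.elim x y a, Sum.elim x y b, Sum.elim x y c} : Set R2)

/-- `ι(w₁,w₂) = (w₁,−w₂)`. -/
def conjPt (w : R2) : R2 := (WithLp.equiv 2 (Fin 2 → ℝ)).symm ![w 0, -(w 1)]

/-- `u` is a (positive/negative) vortex around the points of the family lying in `Ω`:
the closed discs of radii `ρ` are contained in `Ω` and pairwise disjoint,
`u(z) = (z−x_i)/|z−x_i|` on `B_{ρ}(x_i)` and `u(z) = ι((z−y_j)/|z−y_j|)` on `B_{ρ}(y_j)`. -/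
def VortexAt (Ω : Set R2) (u : R2 → R2) {n : ℕ} (x y : Fin n → R2)
    (ρ : Fin n ⊕ Fin n → ℝ) : Prop :=
  (∀ a, Sum.elim x y a ∈ Ω → Metric.closedBall (Sum.elim x y a) (ρ a) ⊆ Ω) ∧
  (∀ a b, a ≠ b → Sum.elim x y a ∈ Ω → Sum.elim x y b ∈ Ω →
    Disjoint (Metric.closedBall (Sum.elim x y a) (ρ a))
      (Metric.closedBall (Sum.elim x y b) (ρ b))) ∧
  (∀ i, x i ∈ Ω → ∀ᵐ z ∂(volume.restrict (Metric.ball (x i) (ρ (Sum.inl i)))),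
    u z = ‖z - x i‖⁻¹ • (z - x i)) ∧
  (∀ i, y i ∈ Ω → ∀ᵐ z ∂(volume.restrict (Metric.ball (y i) (ρ (Sum.inr i)))),
    u z = conjPt (‖z - y i‖⁻¹ • (z - y i)))

/-- The energy `E(I_P, I_D, τ)` of a partition `{I_Dᶜ, I_D}` of `I` and an injection
`τ : I_D → I`. -/
def energy (Ω : Set R2) {n : ℕ} (x y : Fin n → R2) (ID : Finset (Fin n))
    (τ : Fin n → Fin n) : ℝ≥0∞ :=
  ((IDᶜ.filter fun k => x k ∈ Ω).card : ℝ≥0∞) +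
  (((Finset.univ \ ID.image τ).filter fun j => y j ∈ Ω).card : ℝ≥0∞) +
  2 * ∑ k ∈ ID, μH[1] (segment ℝ (y (τ k)) (x k) ∩ Ω)

/-! ### Basic complex objects -/

abbrev E2 := EuclideanSpace ℂ (Fin 2)

def gr (v : R2 → ℂ) (x : R2) : E2 :=
  WithLp.toLp 2 fun j => fderiv ℝ v x (EuclideanSpace.single j 1)

def cu (u : R2 → R2) (x : R2) : ℂ := ⟨u x 0, u x 1⟩

def cG (G : R2 → Matrix (Fin 2) (Fin 2) ℝ) (x : R2) : E2 :=
  WithLp.toLp 2 fun j => (⟨G x 0 j, G x 1 j⟩ : ℂ)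

/-! ### Mollification -/

lemma trans_cont {E : Type*} [NormedAddCommGroup E] (g : R2 → E) (hg : Integrable g) :
    Tendsto (fun w : R2 => ∫⁻ x, ‖g (x - w) - g x‖ₑ) (𝓝 0) (𝓝 0) := by
  have hg1 : MemLp g 1 := memLp_one_iff_integrable.2 hg
  let T : R2 → C(R2, R2) := fun w => ⟨fun x => x - w, by fun_prop⟩
  have hT : Continuous T := by
    refine ContinuousMap.continuous_of_continuous_uncurry _ ?_
    show Continuous fun p : R2 × R2 => p.2 - p.1
    fun_prop
  have hm : ∀ w, MeasurePreserving (T w) volume volume := fun w =>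
    measurePreserving_sub_right volume w
  have := (continuous_const (y := hg1.toLp g)).compMeasurePreservingLp hT hm (by simp)
  have h0 := this.tendsto 0
  have h1 := tendsto_iff_edist_tendsto_0.1 h0
  refine h1.congr fun w => ?_
  rw [Lp.edist_def, eLpNorm_one_eq_lintegral_enorm]
  refine lintegral_congr_ae ?_
  have e1 := Lp.coeFn_compMeasurePreserving (hg1.toLp g) (hm w)
  have e2 := Lp.coeFn_compMeasurePreserving (hg1.toLp g) (hm 0)
  have e3 := (hm w).quasiMeasurePreserving.ae_eq_comp hg1.coeFn_toLp
  have e4 := (hm 0).quasiMeasurePreserving.ae_eq_comp hg1.coeFn_toLp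
  filter_upwards [e1, e2, e3, e4] with x h1 h2 h3 h4
  simp only [Pi.sub_apply]
  rw [h1, h2, h3, h4]
  simp [T]

def mol {E : Type*} [NormedAddCommGroup E] [NormedSpace ℝ E] (k : R2 → ℝ) (g : R2 → E)
    (x : R2) : E := ∫ t, k (x - t) • g t

section
variable {E : Type*} [NormedAddCommGroup E] [NormedSpace ℝ E]

lemma mol_eq_conv (k : R2 → ℝ) (g : R2 → E) :
    mol k g = convolution g k (ContinuousLinearMap.lsmul ℝ ℝ).flip volume := by
  ext x
  simp [mol, convolution]

lemma mol_integrable {k : R2 → ℝ} (hk : Continuous k) (hkc : HasCompactSupport k)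
    {g : R2 → E} (hg : Integrable g) (x : R2) : Integrable fun t => k (x - t) • g t := by
  obtain ⟨M, hM⟩ := hkc.exists_bound_of_continuous hk
  refine Integrable.bdd_smul hg M ?_ ?_
  · exact (by fun_prop : Continuous fun t => k (x - t)).aestronglyMeasurable
  · exact Eventually.of_forall fun t => hM _

lemma mol_L1 {k : R2 → ℝ} (hk : Continuous k) (hkc : HasCompactSupport k) (hk0 : ∀ w, 0 ≤ k w)
    (hk1 : ∫ w, k w = 1) {g : R2 → E} (hg : Integrable g) (δ : ℝ≥0∞)
    (h : ∀ w, k w ≠ 0 → ∫⁻ x, ‖g (x - w) - g x‖ₑ ≤ δ) [CompleteSpace E] :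
    ∫⁻ x, ‖mol k g x - g x‖ₑ ≤ δ := by
  have hki : Integrable k := hk.integrable_of_hasCompactSupport hkc
  have e1 : ∀ x, mol k g x - g x = ∫ w, k w • (g (x - w) - g x) := by
    intro x
    have : mol k g x = ∫ w, k w • g (x - w) := by
      rw [mol, ← integral_sub_left_eq_self _ volume x]
      simp
    rw [this]
    have hi : Integrable fun w => k w • g (x - w) := by
      have := (mol_integrable hk hkc hg x).comp_sub_left x
      simpa using this
    simp_rw [smul_sub]
    rw [integral_sub hi (hki.smul_const _), integral_smul_const, hk1, one_smul]
  have hmeas : AEMeasurable (fun p : R2 × R2 => ‖k p.2 • (g (p.1 - p.2) - g p.1)‖ₑ)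
      ((volume : Measure R2).prod volume) := by
    refine AEStronglyMeasurable.enorm ?_
    refine AEStronglyMeasurable.smul ?_ ?_
    · exact (hk.comp continuous_snd).aestronglyMeasurable
    · refine AEStronglyMeasurable.sub ?_ ?_
      · exact hg.1.comp_quasiMeasurePreserving (quasiMeasurePreserving_sub volume volume)
      · exact hg.1.comp_quasiMeasurePreserving Measure.quasiMeasurePreserving_fst
  calc ∫⁻ x, ‖mol k g x - g x‖ₑ ≤ ∫⁻ x, ∫⁻ w, ‖k w • (g (x - w) - g x)‖ₑ := by
        refine lintegral_mono fun x => ?_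
        rw [e1]
        exact enorm_integral_le_lintegral_enorm _
    _ = ∫⁻ w, ∫⁻ x, ‖k w • (g (x - w) - g x)‖ₑ := lintegral_lintegral_swap hmeas
    _ ≤ ∫⁻ w, ‖k w‖ₑ * δ := by
        refine lintegral_mono fun w => ?_
        simp_rw [enorm_smul]
        rw [lintegral_const_mul' _ _ (by simp)]
        by_cases hw : k w = 0
        · simp [hw]
        · gcongr
          exact h w hw
    _ = δ := by
        rw [lintegral_mul_const _ hk.measurable.enorm]
        have : ∫⁻ w, ‖k w‖ₑ = 1 := by
          rw [← ofReal_integral_norm_eq_lintegral_enorm hki]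
          simp_rw [Real.norm_of_nonneg (hk0 _)]
          simp [hk1]
        rw [this, one_mul]

lemma mol_norm_le {k : R2 → ℝ} (hk : Continuous k) (hkc : HasCompactSupport k)
    (hk0 : ∀ w, 0 ≤ k w)
    (hk1 : ∫ w, k w = 1) {g : R2 → E} (hg1 : ∀ᵐ x, ‖g x‖ ≤ 1) (x : R2) :
    ‖mol k g x‖ ≤ 1 := by
  have hki : Integrable k := hk.integrable_of_hasCompactSupport hkc
  have : ∫ t, k (x - t) = 1 := by rw [integral_sub_left_eq_self k volume x, hk1]
  rw [← this]
  refine norm_integral_le_of_norm_le (hki.comp_sub_left x) ?_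
  filter_upwards [hg1] with t ht
  rw [norm_smul, Real.norm_of_nonneg (hk0 _)]
  exact mul_le_of_le_one_right (hk0 _) ht

lemma mol_contDiff {k : R2 → ℝ} (hk : ContDiff ℝ (⊤ : ℕ∞) k) (hkc : HasCompactSupport k)
    {g : R2 → E} (hg : Integrable g) : ContDiff ℝ (⊤ : ℕ∞) (mol k g) := by
  rw [mol_eq_conv]
  exact hkc.contDiff_convolution_right _ hg.locallyIntegrable hk

lemma mol_fderiv [CompleteSpace E] {k : R2 → ℝ} (hk : ContDiff ℝ (⊤ : ℕ∞) k)
    (hkc : HasCompactSupport k)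
    {g : R2 → E} (hg : Integrable g) (x v : R2) :
    fderiv ℝ (mol k g) x v = ∫ t, (fderiv ℝ k (x - t) v) • g t := by
  have hk1 : ContDiff ℝ 1 k := hk.of_le (by exact_mod_cast le_top)
  rw [mol_eq_conv, (hkc.hasFDerivAt_convolution_right _ hg.locallyIntegrable hk1 x).fderiv]
  rw [convolution, ContinuousLinearMap.integral_apply]
  · rfl
  have := (hkc.fderiv (𝕜 := ℝ)).convolutionExists_right
    ((ContinuousLinearMap.lsmul ℝ ℝ).flip.precompR R2) hg.locallyIntegrable
    (hk1.continuous_fderiv (by simp)) x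
  exact this

end

lemma cu_integrable {Ω : Set R2} {u : R2 → R2} (h : IntegrableOn u Ω) :
    IntegrableOn (cu u) Ω := by
  have h0 : IntegrableOn (fun x => u x 0) Ω :=
    (EuclideanSpace.proj (𝕜 := ℝ) (0 : Fin 2)).integrable_comp h
  have h1 : IntegrableOn (fun x => u x 1) Ω :=
    (EuclideanSpace.proj (𝕜 := ℝ) (1 : Fin 2)).integrable_comp h
  have : cu u = fun x => ((u x 0 : ℝ) : ℂ) + ((u x 1 : ℝ) : ℂ) * Complex.I := by
    ext x
    apply Complex.ext <;> simp [cu]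
  rw [this]
  exact (h0.ofReal).add ((h1.ofReal).mul_const _)

lemma cGj_integrable {Ω : Set R2} {G : R2 → Matrix (Fin 2) (Fin 2) ℝ}
    (h : ∀ i j : Fin 2, IntegrableOn (fun x => G x i j) Ω) (j : Fin 2) :
    IntegrableOn (fun x => cG G x j) Ω := by
  have : (fun x => cG G x j) = fun x => ((G x 0 j : ℝ) : ℂ) + ((G x 1 j : ℝ) : ℂ) * Complex.I := by
    ext x
    apply Complex.ext <;> simp [cG]
  rw [this]
  exact ((h 0 j).ofReal).add (((h 1 j).ofReal).mul_const _)

lemma cG_integrable {Ω : Set R2} {G : R2 → Matrix (Fin 2) (Fin 2) ℝ}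
    (h : ∀ i j : Fin 2, IntegrableOn (fun x => G x i j) Ω) :
    IntegrableOn (cG G) Ω := by
  have h2 : IntegrableOn (fun x => (fun j => cG G x j : Fin 2 → ℂ)) Ω :=
    Integrable.of_eval fun j => cGj_integrable h j
  exact ((PiLp.continuousLinearEquiv 2 ℝ (fun _ : Fin 2 => ℂ)).symm :
    (Fin 2 → ℂ) →L[ℝ] E2).integrable_comp h2

/-- Weak gradient in complex form. -/
lemma weak_complex {Ω : Set R2} {u : R2 → R2} {G : R2 → Matrix (Fin 2) (Fin 2) ℝ}
    (hu : MemW11 Ω u G) {φ : R2 → ℝ} (h1 : ContDiff ℝ (⊤ : ℕ∞) φ) (h2 : HasCompactSupport φ)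
    (h3 : tsupport φ ⊆ Ω) (j : Fin 2) :
    ∫ x in Ω, (fderiv ℝ φ x (EuclideanSpace.single j 1)) • cu u x =
      - ∫ x in Ω, φ x • cG G x j := by
  obtain ⟨M, hM⟩ := h2.exists_bound_of_continuous h1.continuous
  have h1' : Continuous fun x => fderiv ℝ φ x (EuclideanSpace.single j 1) :=
    (h1.continuous_fderiv (by simp)).clm_apply continuous_const
  obtain ⟨M', hM'⟩ := (h2.fderiv_apply (𝕜 := ℝ)
    (EuclideanSpace.single j 1)).exists_bound_of_continuous h1'
  have i1 : Integrable (fun x => (fderiv ℝ φ x (EuclideanSpace.single j 1)) • cu u x)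
      (volume.restrict Ω) :=
    Integrable.bdd_smul (cu_integrable hu.1) M' h1'.aestronglyMeasurable
      (Eventually.of_forall hM')
  have i2 : Integrable (fun x => φ x • cG G x j) (volume.restrict Ω) :=
    Integrable.bdd_smul (cGj_integrable hu.2.1 j) M h1.continuous.aestronglyMeasurable
      (Eventually.of_forall hM)
  have key := hu.2.2 φ h1 h2 h3
  apply Complex.ext
  · have a1 := Complex.reCLM.integral_comp_comm i1
    have a2 := Complex.reCLM.integral_comp_comm i2
    have k := key 0 j
    simp only [Complex.reCLM_apply, Complex.real_smul, Complex.re_ofReal_mul] at a1 a2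
    simp only [Complex.neg_re, Complex.real_smul]
    rw [← a1, ← a2]
    simp only [mul_comm] at k ⊢
    simpa [cu, cG] using k
  · have a1 := Complex.imCLM.integral_comp_comm i1
    have a2 := Complex.imCLM.integral_comp_comm i2
    have k := key 1 j
    simp only [Complex.imCLM_apply, Complex.real_smul, Complex.im_ofReal_mul] at a1 a2
    simp only [Complex.neg_im, Complex.real_smul]
    rw [← a1, ← a2]
    simp only [mul_comm] at k ⊢
    simpa [cu, cG] using k

lemma mol_gr {Ω : Set R2} (hΩ : IsOpen Ω) {u : R2 → R2} {G : R2 → Matrix (Fin 2) (Fin 2) ℝ}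
    (hu : MemW11 Ω u G) {k : R2 → ℝ} (hk : ContDiff ℝ (⊤ : ℕ∞) k) (hkc : HasCompactSupport k)
    (x : R2) (hx : ∀ w ∈ tsupport k, x - w ∈ Ω) :
    gr (mol k (Ω.indicator (cu u))) x = mol k (Ω.indicator (cG G)) x := by
  have hui : Integrable (Ω.indicator (cu u)) :=
    (integrable_indicator_iff hΩ.measurableSet).2 (cu_integrable hu.1)
  have hGi : Integrable (Ω.indicator (cG G)) :=
    (integrable_indicator_iff hΩ.measurableSet).2 (cG_integrable hu.2.1)
  have hφ : ContDiff ℝ (⊤ : ℕ∞) fun t => k (x - t) := hk.comp (contDiff_const.sub contDiff_id)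
  have hs : tsupport (fun t => k (x - t)) = (fun t => x - t) ⁻¹' tsupport k :=
    tsupport_comp_eq_preimage k (Homeomorph.subLeft x)
  have hφc : HasCompactSupport fun t => k (x - t) := hkc.comp_homeomorph (Homeomorph.subLeft x)
  have hsub : tsupport (fun t => k (x - t)) ⊆ Ω := by
    rw [hs]
    intro t ht
    simpa using hx _ ht
  ext j
  have hw := weak_complex hu hφ hφc hsub j
  have hd : ∀ t, fderiv ℝ (fun t => k (x - t)) t (EuclideanSpace.single j 1) =
      - fderiv ℝ k (x - t) (EuclideanSpace.single j 1) := by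
    intro t
    have := (hk.differentiable (by simp) (x - t)).hasFDerivAt.comp t
      ((hasFDerivAt_id t).const_sub x)
    have h2 := this.fderiv
    simp only [Function.comp_def] at h2
    rw [h2]
    simp
  have e1 : (gr (mol k (Ω.indicator (cu u))) x) j =
      ∫ t, (fderiv ℝ k (x - t) (EuclideanSpace.single j 1)) • Ω.indicator (cu u) t :=
    mol_fderiv hk hkc hui x _
  have e2 : (mol k (Ω.indicator (cG G)) x) j = ∫ t, k (x - t) • (Ω.indicator (cG G) t) j := by
    have := ((EuclideanSpace.proj j : E2 →L[ℂ] ℂ).restrictScalars ℝ)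
      |>.integral_comp_comm (mol_integrable hk.continuous hkc hGi x)
    rw [mol]
    exact this.symm
  rw [e1, e2]
  have e3 : ∀ t, (fderiv ℝ k (x - t) (EuclideanSpace.single j 1)) • Ω.indicator (cu u) t =
      Ω.indicator (fun t => (fderiv ℝ k (x - t) (EuclideanSpace.single j 1)) • cu u t) t := by
    intro t
    by_cases ht : t ∈ Ω <;> simp [ht]
  have e4 : ∀ t, k (x - t) • (Ω.indicator (cG G) t) j =
      Ω.indicator (fun t => k (x - t) • cG G t j) t := by
    intro t
    by_cases ht : t ∈ Ω <;> simp [ht]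
  simp_rw [e3, e4]
  rw [integral_indicator hΩ.measurableSet, integral_indicator hΩ.measurableSet]
  simp_rw [hd, neg_smul] at hw
  rw [integral_neg] at hw
  exact neg_injective hw

lemma cone_lemma {Ω : Set R2} (hΩo : IsOpen Ω) (hΩl : HasLipschitzBoundary Ω) {p : R2}
    (hp : p ∈ closure Ω) : ∃ r > 0, ∃ e : R2, ∃ κ > 0, ∃ s₀ > 0, ∀ x ∈ Ω, x ∈ ball p r →
      ∀ s, 0 < s → s < s₀ → ∀ w ∈ closedBall (s • e) (s * κ), x + w ∈ Ω := by
  by_cases hpo : p ∈ Ω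
  · obtain ⟨r, hr, hb⟩ := Metric.isOpen_iff.1 hΩo p hpo
    refine ⟨r / 2, by positivity, 0, 1, one_pos, r / 2, by positivity, ?_⟩
    intro x hx hxp s hs hs0 w hw
    apply hb
    simp only [smul_zero, mul_one, mem_closedBall, mem_ball, dist_eq_norm, sub_zero] at *
    calc ‖x + w - p‖ = ‖(x - p) + w‖ := by congr 1; abel
      _ ≤ ‖x - p‖ + ‖w‖ := norm_add_le _ _
      _ < r := by linarith
  · have hpf : p ∈ frontier Ω := by
      rw [hΩo.frontier_eq]; exact ⟨hp, hpo⟩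
    obtain ⟨r, hr, f, γ, L, hγ, hf⟩ := hΩl p hpf
    let F := f.toRealAffineIsometryEquiv
    have hF : ∀ x w, f (x + w) = f x + F.linearIsometryEquiv w := by
      intro x w
      have := F.map_vadd x w
      simp only [vadd_eq_add] at this
      rw [add_comm x w]
      rw [show f (w + x) = F (w + x) from rfl, this, add_comm]
      rfl
    set A := F.linearIsometryEquiv
    set e1 : R2 := EuclideanSpace.single 1 1
    have hL : (0:ℝ) < L + 1 := by positivity
    refine ⟨r / 2, by positivity, A.symm e1, 1 / (L + 1), by positivity, r / 4, by positivity, ?_⟩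
    intro x hx hxp s hs hs0 w hw
    have hxr : x ∈ ball p r := ball_subset_ball (by linarith) hxp
    have h1 := (hf x hxr).1 hx
    set d : R2 := A w - s • e1 with hd
    have hdn : ‖d‖ ≤ s * (1 / (L + 1)) := by
      have : d = A (w - s • A.symm e1) := by simp [hd]
      rw [this, A.norm_map, ← dist_eq_norm]
      exact hw
    have hκ : s * (1 / ((L:ℝ) + 1)) ≤ s := by
      have : 1 / ((L:ℝ) + 1) ≤ 1 := by
        rw [div_le_one hL]; have := L.2; simp
      nlinarith
    have he1 : ‖A.symm e1‖ = 1 := by rw [A.symm.norm_map]; simp [e1]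
    have hwn : ‖w‖ ≤ 2 * s := by
      have h2 : ‖w - s • A.symm e1‖ ≤ s * (1 / (L + 1)) := by rw [← dist_eq_norm]; exact hw
      have h3 : ‖s • A.symm e1‖ = s := by rw [norm_smul, he1, Real.norm_of_nonneg hs.le, mul_one]
      calc ‖w‖ = ‖(w - s • A.symm e1) + s • A.symm e1‖ := by simp
        _ ≤ _ := norm_add_le _ _
        _ ≤ 2 * s := by rw [h3]; linarith
    have hxw : x + w ∈ ball p r := by
      simp only [mem_ball, dist_eq_norm] at *
      calc ‖x + w - p‖ = ‖(x - p) + w‖ := by congr 1; abel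
        _ ≤ ‖x - p‖ + ‖w‖ := norm_add_le _ _
        _ < r := by linarith
    refine (hf _ hxw).2 ?_
    have hAw : A w = d + s • e1 := by simp [hd]
    rw [hF, hAw]
    have d0 : |d 0| ≤ s * (1 / (L + 1)) := (PiLp.norm_apply_le d 0).trans hdn
    have d1 : |d 1| ≤ s * (1 / (L + 1)) := (PiLp.norm_apply_le d 1).trans hdn
    have e10 : e1 0 = 0 := by simp [e1]
    have e11 : e1 1 = 1 := by simp [e1]
    simp only [PiLp.add_apply, PiLp.smul_apply, e10, e11, smul_eq_mul, mul_zero, add_zero, mul_one]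
    have hl := hγ.dist_le_mul (f x 0 + d 0) (f x 0)
    rw [Real.dist_eq, Real.dist_eq] at hl
    have : f x 0 + d 0 - f x 0 = d 0 := by ring
    rw [this] at hl
    have h5 := (abs_le.1 hl).2
    have h6 : (L:ℝ) * |d 0| ≤ L * (s * (1 / (L + 1))) := by gcongr
    have h7 := (abs_le.1 d1).1
    have h8 : (L:ℝ) * (s * (1 / (L + 1))) + s * (1 / (L + 1)) = s := by field_simp
    linarith

lemma kernel_lemma {Ω : Set R2} (hΩo : IsOpen Ω) (hΩl : HasLipschitzBoundary Ω) {p : R2}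
    (hp : p ∈ closure Ω) : ∃ r > 0, ∀ τ > 0, ∃ k : R2 → ℝ, ContDiff ℝ (⊤ : ℕ∞) k ∧
      HasCompactSupport k ∧ (∀ w, 0 ≤ k w) ∧ ∫ w, k w = 1 ∧
      (∀ w, k w ≠ 0 → w ∈ ball (0 : R2) τ) ∧
      ∀ x ∈ Ω, x ∈ ball p r → ∀ w ∈ tsupport k, x - w ∈ Ω := by
  obtain ⟨r, hr, e, κ, hκ, s₀, hs₀, h⟩ := cone_lemma hΩo hΩl hp
  refine ⟨r, hr, fun τ hτ => ?_⟩
  have hD : 0 < ‖e‖ + κ := by positivity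
  obtain ⟨s, hs, hs1, hs2⟩ : ∃ s : ℝ, 0 < s ∧ s < s₀ ∧ s * (‖e‖ + κ) < τ := by
    refine ⟨min (s₀ / 2) (τ / (2 * (‖e‖ + κ))), by positivity, ?_, ?_⟩
    · exact (min_le_left _ _).trans_lt (by linarith)
    · calc _ ≤ τ / (2 * (‖e‖ + κ)) * (‖e‖ + κ) := by gcongr; exact min_le_right _ _
        _ = τ / 2 := by field_simp
        _ < τ := by linarith
  let b : ContDiffBump (-(s • e)) := ⟨s * κ / 2, s * κ, by positivity, by
    have : 0 < s * κ := by positivity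
    linarith⟩
  refine ⟨b.normed volume, b.contDiff_normed, b.hasCompactSupport_normed, b.nonneg_normed,
    b.integral_normed, ?_, ?_⟩
  · intro w hw
    have : w ∈ Function.support (b.normed volume) := hw
    rw [b.support_normed_eq, mem_ball, dist_eq_norm] at this
    rw [mem_ball, dist_zero_right]
    have h1 : ‖w - -(s • e)‖ < s * κ := this
    calc ‖w‖ = ‖(w - -(s • e)) + -(s • e)‖ := by simp
      _ ≤ ‖w - -(s • e)‖ + ‖-(s • e)‖ := norm_add_le _ _
      _ < s * κ + s * ‖e‖ := by
        rw [norm_neg, norm_smul, Real.norm_of_nonneg hs.le]; linarith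
      _ < τ := by linarith
  · intro x hx hxp w hw
    rw [b.tsupport_normed_eq, mem_closedBall, dist_eq_norm] at hw
    have h1 : ‖w - -(s • e)‖ ≤ s * κ := hw
    rw [sub_eq_add_neg]
    refine h x hx hxp s hs hs1 _ ?_
    rw [mem_closedBall, dist_eq_norm, ← norm_neg]
    have h2 : -(-w - s • e) = w - -(s • e) := by abel
    rw [h2]
    exact h1

lemma gr_mul {f g : R2 → ℂ} {x : R2} (hf : DifferentiableAt ℝ f x) (hg : DifferentiableAt ℝ g x) :
    gr (fun x => f x * g x) x = f x • gr g x + g x • gr f x := by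
  ext j
  simp only [gr, PiLp.add_apply, PiLp.smul_apply]
  rw [fderiv_fun_mul hf hg]
  simp

lemma gr_sum {ι : Type*} (s : Finset ι) {f : ι → R2 → ℂ} {x : R2}
    (hf : ∀ i ∈ s, DifferentiableAt ℝ (f i) x) :
    gr (fun x => ∑ i ∈ s, f i x) x = ∑ i ∈ s, gr (f i) x := by
  ext j
  rw [gr]
  simp only [fderiv_fun_sum hf]
  simp [gr]

lemma gr_const (c : ℂ) (x : R2) : gr (fun _ => c) x = 0 := by
  ext j
  simp [gr]

lemma gr_congr {f g : R2 → ℂ} {x : R2} (h : f =ᶠ[𝓝 x] g) : gr f x = gr g x := by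
  ext j
  simp [gr, h.fderiv_eq]

lemma gr_cont {v : R2 → ℂ} (h : ContDiff ℝ (⊤ : ℕ∞) v) : Continuous (gr v) := by
  have := h.continuous_fderiv (by simp)
  unfold gr
  refine (PiLp.continuous_toLp 2 _).comp (continuous_pi fun j => ?_)
  exact this.clm_apply continuous_const

lemma approx_delta {Ω : Set R2} (hΩo : IsOpen Ω) (hΩb : Bornology.IsBounded Ω)
    (hΩl : HasLipschitzBoundary Ω) {u : R2 → R2} {G : R2 → Matrix (Fin 2) (Fin 2) ℝ}
    (hu : MemW11 Ω u G) (hS : SphereValued Ω u) {δ : ℝ} (hδ : 0 < δ) :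
    ∃ a : R2 → ℂ, ContDiff ℝ (⊤ : ℕ∞) a ∧ (∀ x, ‖a x‖ ≤ 1) ∧
      (∫⁻ x in Ω, ‖a x - cu u x‖ₑ ≤ ENNReal.ofReal δ) ∧
      (∫⁻ x in Ω, ‖gr a x - cG G x‖ₑ ≤ ENNReal.ofReal δ) := by
  have hK : IsCompact (closure Ω) := hΩb.isCompact_closure
  have hker : ∀ p : closure Ω, _ := fun p => kernel_lemma hΩo hΩl p.2
  choose r hr hker using hker
  obtain ⟨t, ht⟩ := hK.elim_finite_subcover (fun p : closure Ω => ball (p : R2) (r p))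
    (fun p => isOpen_ball) (fun x hx => mem_iUnion.2 ⟨⟨x, hx⟩, mem_ball_self (hr _)⟩)
  have ht' : closure Ω ⊆ ⋃ i : t, ball ((i : closure Ω) : R2) (r i) := by
    intro x hx
    obtain ⟨i, hi, hxi⟩ := mem_iUnion₂.1 (ht hx)
    exact mem_iUnion.2 ⟨⟨i, hi⟩, hxi⟩
  obtain ⟨ζ, hζ⟩ := SmoothPartitionOfUnity.exists_isSubordinate (modelWithCornersSelf ℝ R2)
    isClosed_closure (fun i : t => ball ((i : closure Ω) : R2) (r i)) (fun i => isOpen_ball) ht'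
  let z : t → R2 → ℂ := fun i x => ((ζ i x : ℝ) : ℂ)
  have hζd : ∀ i, ContDiff ℝ (⊤ : ℕ∞) (ζ i) := fun i => (ζ i).contMDiff.contDiff
  have hzd : ∀ i, ContDiff ℝ (⊤ : ℕ∞) (z i) := fun i => Complex.ofRealCLM.contDiff.comp (hζd i)
  have hsum1 : ∀ x ∈ closure Ω, ∑ i, ζ i x = 1 := by
    intro x hx
    rw [← finsum_eq_sum_of_fintype]
    exact ζ.sum_eq_one hx
  have hsumle : ∀ x, ∑ i, ζ i x ≤ 1 := by
    intro x
    rw [← finsum_eq_sum_of_fintype]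
    exact ζ.sum_le_one x
  have hzc : ∀ i, HasCompactSupport (z i) := by
    intro i
    have h1 : HasCompactSupport (ζ i) := by
      refine HasCompactSupport.of_support_subset_isCompact
        (isCompact_closedBall ((i : closure Ω) : R2) (r i)) ?_
      exact (subset_tsupport _).trans ((hζ i).trans ball_subset_closedBall)
    exact h1.comp_left (g := fun x : ℝ => (x : ℂ)) (by simp)
  have hbd : ∀ i, ∃ M : ℝ, ∀ x, ‖gr (z i) x‖ ≤ M := by
    intro i
    refine HasCompactSupport.exists_bound_of_continuous ?_ (gr_cont (hzd i))
    have h1 := (hzc i).fderiv (𝕜 := ℝ)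
    refine h1.mono ?_
    intro x hx hx2
    apply hx
    ext j
    simp [gr, hx2]
  choose M hM using hbd
  have hM0 : ∀ i, 0 ≤ M i := fun i => (norm_nonneg _).trans (hM i 0)
  set U := Ω.indicator (cu u) with hU
  set H := Ω.indicator (cG G) with hH
  have hUi : Integrable U :=
    (integrable_indicator_iff hΩo.measurableSet).2 (cu_integrable hu.1)
  have hHi : Integrable H :=
    (integrable_indicator_iff hΩo.measurableSet).2 (cG_integrable hu.2.1)
  set N : ℝ := ∑ i, (1 + M i) + 1 with hN
  have hN0 : 0 < N := by
    have : 0 ≤ ∑ i, (1 + M i) := Finset.sum_nonneg fun i _ => by linarith [hM0 i]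
    linarith
  set δ' := ENNReal.ofReal (δ / N) with hδ'
  have hδ'0 : 0 < δ' := by rw [hδ']; exact ENNReal.ofReal_pos.2 (by positivity)
  obtain ⟨τ, hτ, hτ1⟩ : ∃ τ > 0, ∀ w ∈ ball (0 : R2) τ,
      ∫⁻ x, ‖U (x - w) - U x‖ₑ ≤ δ' ∧ ∫⁻ x, ‖H (x - w) - H x‖ₑ ≤ δ' := by
    have h1 := (trans_cont U hUi).eventually (Iic_mem_nhds hδ'0)
    have h2 := (trans_cont H hHi).eventually (Iic_mem_nhds hδ'0)
    exact Metric.eventually_nhds_iff_ball.1 (h1.and h2)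
  have hk : ∀ i : t, _ := fun i => hker i τ hτ
  choose k hkd hkc hk0 hk1 hks hkΩ using hk
  have hU1 : ∀ᵐ x, ‖U x‖ ≤ 1 := by
    have := (ae_restrict_iff' hΩo.measurableSet).1 hS
    filter_upwards [this] with x hx
    by_cases hxo : x ∈ Ω
    · have h1 := hx hxo
      rw [hU, indicator_of_mem hxo]
      have : ‖cu u x‖ = ‖u x‖ := by
        rw [Complex.norm_def, EuclideanSpace.norm_eq, Complex.normSq_apply]
        simp [cu, sq]
      rw [this, h1]
    · simp [hU, hxo]
  have hmd : ∀ i, ContDiff ℝ (⊤ : ℕ∞) (mol (k i) U) := fun i => mol_contDiff (hkd i) (hkc i) hUi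
  have hL1U : ∀ i, ∫⁻ x, ‖mol (k i) U x - U x‖ₑ ≤ δ' := fun i =>
    mol_L1 (hkd i).continuous (hkc i) (hk0 i) (hk1 i) hUi δ' fun w hw => (hτ1 w (hks i w hw)).1
  have hL1H : ∀ i, ∫⁻ x, ‖mol (k i) H x - H x‖ₑ ≤ δ' := fun i =>
    mol_L1 (hkd i).continuous (hkc i) (hk0 i) (hk1 i) hHi δ' fun w hw => (hτ1 w (hks i w hw)).2
  have hz1 : ∀ i x, ‖z i x‖ ≤ 1 := by
    intro i x
    simp only [z, Complex.norm_real, Real.norm_eq_abs]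
    rw [abs_of_nonneg (ζ.nonneg i x)]
    exact ζ.le_one i x
  have hmolc : ∀ i, Continuous (mol (k i) H) := fun i =>
    (mol_contDiff (hkd i) (hkc i) hHi).continuous
  refine ⟨fun x => ∑ i, z i x * mol (k i) U x, ?_, ?_, ?_, ?_⟩
  · exact ContDiff.sum fun i _ => (hzd i).mul (hmd i)
  · intro x
    calc ‖∑ i, z i x * mol (k i) U x‖ ≤ ∑ i, ‖z i x * mol (k i) U x‖ := norm_sum_le _ _
      _ ≤ ∑ i, ζ i x := by
        refine Finset.sum_le_sum fun i _ => ?_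
        rw [norm_mul]
        simp only [z, Complex.norm_real, Real.norm_eq_abs]
        rw [abs_of_nonneg (ζ.nonneg i x)]
        exact mul_le_of_le_one_right (ζ.nonneg i x)
          (mol_norm_le (hkd i).continuous (hkc i) (hk0 i) (hk1 i) hU1 x)
      _ ≤ 1 := hsumle x
  · have hpt : ∀ x ∈ Ω, ‖(∑ i, z i x * mol (k i) U x) - cu u x‖ₑ ≤
        ∑ i, ‖mol (k i) U x - U x‖ₑ := by
      intro x hx
      have hs : ∑ i, z i x = 1 := by
        have := hsum1 x (subset_closure hx)
        simp only [z]
        exact_mod_cast this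
      have : (∑ i, z i x * mol (k i) U x) - cu u x = ∑ i, z i x * (mol (k i) U x - U x) := by
        simp_rw [mul_sub]
        rw [Finset.sum_sub_distrib, ← Finset.sum_mul, hs, one_mul, hU, indicator_of_mem hx]
      rw [this]
      refine (enorm_sum_le _ _).trans (Finset.sum_le_sum fun i _ => ?_)
      rw [enorm_mul]
      refine mul_le_of_le_one_left (by simp) ?_
      rw [← ofReal_norm]
      exact ENNReal.ofReal_le_one.2 (hz1 i x)
    calc ∫⁻ x in Ω, ‖(∑ i, z i x * mol (k i) U x) - cu u x‖ₑ
        ≤ ∫⁻ x in Ω, ∑ i, ‖mol (k i) U x - U x‖ₑ :=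
          setLIntegral_mono' hΩo.measurableSet hpt
      _ ≤ ∫⁻ x, ∑ i, ‖mol (k i) U x - U x‖ₑ := setLIntegral_le_lintegral _ _
      _ = ∑ i, ∫⁻ x, ‖mol (k i) U x - U x‖ₑ := lintegral_finsetSum' _ fun i _ =>
          ((hmd i).continuous.aestronglyMeasurable.sub hUi.1).enorm
      _ ≤ ∑ i : t, δ' := Finset.sum_le_sum fun i _ => hL1U i
      _ = ∑ i : t, ENNReal.ofReal (δ / N) := rfl
      _ = ENNReal.ofReal (∑ i : t, δ / N) :=
          (ENNReal.ofReal_sum_of_nonneg fun i _ => by positivity).symm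
      _ ≤ ENNReal.ofReal δ := by
          apply ENNReal.ofReal_le_ofReal
          have h1 : ∑ i : t, (1:ℝ) ≤ N := by
            have := Finset.sum_le_sum (s := Finset.univ) (f := fun i : t => (1:ℝ))
              (g := fun i => 1 + M i) fun i _ => by linarith [hM0 i]
            linarith
          calc ∑ i : t, δ / N = (∑ i : t, (1:ℝ)) * (δ / N) := by rw [Finset.sum_mul]; simp
            _ ≤ N * (δ / N) := by gcongr
            _ = δ := by field_simp
  · have hpt : ∀ x ∈ Ω, ‖gr (fun x => ∑ i, z i x * mol (k i) U x) x - cG G x‖ₑ ≤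
        ∑ i, (‖mol (k i) H x - H x‖ₑ + ENNReal.ofReal (M i) * ‖mol (k i) U x - U x‖ₑ) := by
      intro x hx
      have hs : ∑ i, z i x = 1 := by
        have := hsum1 x (subset_closure hx)
        simp only [z]
        exact_mod_cast this
      have hs' : ∑ i, gr (z i) x = 0 := by
        rw [← gr_sum _ fun i _ => (hzd i).differentiable (by simp) x]
        rw [← gr_const 1 x]
        apply gr_congr
        filter_upwards [hΩo.mem_nhds hx] with y hy
        have := hsum1 y (subset_closure hy)
        simp only [z]
        exact_mod_cast this
      have h1 : gr (fun x => ∑ i, z i x * mol (k i) U x) x =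
          ∑ i, (z i x • mol (k i) H x + mol (k i) U x • gr (z i) x) := by
        rw [gr_sum _ fun i _ => ((hzd i).mul (hmd i)).differentiable (by simp) x]
        refine Finset.sum_congr rfl fun i _ => ?_
        rw [gr_mul ((hzd i).differentiable (by simp) x) ((hmd i).differentiable (by simp) x)]
        by_cases hzi : z i x = 0
        · simp [hzi]
        · rw [mol_gr hΩo hu (hkd i) (hkc i) x]
          apply hkΩ i x hx
          apply hζ i
          apply subset_tsupport
          intro h0
          apply hzi
          simp [z, h0]
      have h2 : gr (fun x => ∑ i, z i x * mol (k i) U x) x - cG G x =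
          ∑ i, (z i x • (mol (k i) H x - H x) + (mol (k i) U x - U x) • gr (z i) x) := by
        rw [h1]
        simp_rw [smul_sub, sub_smul]
        rw [Finset.sum_add_distrib, Finset.sum_add_distrib, Finset.sum_sub_distrib,
          Finset.sum_sub_distrib, ← Finset.sum_smul, ← Finset.smul_sum (r := U x), hs, hs', hH,
          indicator_of_mem hx]
        simp
        abel
      rw [h2]
      refine (enorm_sum_le _ _).trans (Finset.sum_le_sum fun i _ => ?_)
      refine (enorm_add_le _ _).trans (add_le_add ?_ ?_)
      · rw [enorm_smul]
        refine mul_le_of_le_one_left (by simp) ?_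
        rw [← ofReal_norm]
        exact ENNReal.ofReal_le_one.2 (hz1 i x)
      · rw [enorm_smul, mul_comm]
        gcongr
        rw [← ofReal_norm]
        exact ENNReal.ofReal_le_ofReal (hM i x)
    calc ∫⁻ x in Ω, ‖gr (fun x => ∑ i, z i x * mol (k i) U x) x - cG G x‖ₑ
        ≤ ∫⁻ x in Ω, ∑ i, (‖mol (k i) H x - H x‖ₑ +
            ENNReal.ofReal (M i) * ‖mol (k i) U x - U x‖ₑ) :=
          setLIntegral_mono' hΩo.measurableSet hpt
      _ ≤ ∫⁻ x, ∑ i, (‖mol (k i) H x - H x‖ₑ +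
            ENNReal.ofReal (M i) * ‖mol (k i) U x - U x‖ₑ) := setLIntegral_le_lintegral _ _
      _ = ∑ i, ((∫⁻ x, ‖mol (k i) H x - H x‖ₑ) +
            ENNReal.ofReal (M i) * ∫⁻ x, ‖mol (k i) U x - U x‖ₑ) := by
          have m1 : ∀ i, AEMeasurable (fun x => ‖mol (k i) H x - H x‖ₑ) := fun i =>
            ((hmolc i).aestronglyMeasurable.sub hHi.1).enorm
          have m2 : ∀ i, AEMeasurable (fun x => ‖mol (k i) U x - U x‖ₑ) := fun i =>
            ((hmd i).continuous.aestronglyMeasurable.sub hUi.1).enorm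
          have m3 : ∀ i, AEMeasurable (fun x => ‖mol (k i) H x - H x‖ₑ +
              ENNReal.ofReal (M i) * ‖mol (k i) U x - U x‖ₑ) := fun i =>
            (m1 i).add ((m2 i).const_mul _)
          rw [lintegral_finsetSum' _ fun i _ => m3 i]
          refine Finset.sum_congr rfl fun i _ => ?_
          rw [lintegral_add_left' (m1 i), lintegral_const_mul'' _ (m2 i)]
      _ ≤ ∑ i : t, (δ' + ENNReal.ofReal (M i) * δ') := Finset.sum_le_sum fun i _ => by
          gcongr
          · exact hL1H i
          · exact hL1U i
      _ = ∑ i : t, ENNReal.ofReal ((1 + M i) * (δ / N)) := by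
          refine Finset.sum_congr rfl fun i _ => ?_
          rw [add_mul, one_mul, ENNReal.ofReal_add (by positivity)
            (mul_nonneg (hM0 i) (by positivity)), ENNReal.ofReal_mul (hM0 i)]
      _ = ENNReal.ofReal (∑ i : t, (1 + M i) * (δ / N)) :=
          (ENNReal.ofReal_sum_of_nonneg fun i _ =>
            mul_nonneg (by linarith [hM0 i]) (by positivity)).symm
      _ ≤ ENNReal.ofReal δ := by
          apply ENNReal.ofReal_le_ofReal
          rw [← Finset.sum_mul]
          calc (∑ i : t, (1 + M i)) * (δ / N) ≤ N * (δ / N) := by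
                gcongr
                linarith
            _ = δ := by field_simp

theorem approx_seq {Ω : Set R2} (hΩo : IsOpen Ω) (hΩb : Bornology.IsBounded Ω)
    (hΩl : HasLipschitzBoundary Ω) {u : R2 → R2} {G : R2 → Matrix (Fin 2) (Fin 2) ℝ}
    (hu : MemW11 Ω u G) (hS : SphereValued Ω u) :
    ∃ a : ℕ → R2 → ℂ, (∀ n, ContDiff ℝ (⊤ : ℕ∞) (a n)) ∧ (∀ n x, ‖a n x‖ ≤ 1) ∧
      (∀ᵐ x ∂(volume.restrict Ω), Tendsto (fun n => a n x) atTop (𝓝 (cu u x))) ∧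
      Tendsto (fun n => ∫⁻ x in Ω, ‖gr (a n) x - cG G x‖ₑ) atTop (𝓝 0) := by
  have h : ∀ n : ℕ, _ := fun n => approx_delta hΩo hΩb hΩl hu hS (δ := 1 / ((n : ℝ) + 1))
    (by positivity)
  choose a ha1 ha2 ha3 ha4 using h
  have hlim : Tendsto (fun n : ℕ => ENNReal.ofReal (1 / ((n : ℝ) + 1))) atTop (𝓝 0) := by
    have := ENNReal.tendsto_ofReal tendsto_one_div_add_atTop_nhds_zero_nat
    simpa using this
  have hm : TendstoInMeasure (volume.restrict Ω) a atTop (cu u) := by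
    refine tendstoInMeasure_of_tendsto_eLpNorm (p := 1) one_ne_zero
      (fun n => (ha1 n).continuous.aestronglyMeasurable) (cu_integrable hu.1).1 ?_
    simp_rw [eLpNorm_one_eq_lintegral_enorm]
    exact tendsto_of_tendsto_of_tendsto_of_le_of_le tendsto_const_nhds hlim (fun n => zero_le) ha3
  obtain ⟨ns, hns, hae⟩ := hm.exists_seq_tendsto_ae
  refine ⟨fun n => a (ns n), fun n => ha1 _, fun n => ha2 _, hae, ?_⟩
  exact (tendsto_of_tendsto_of_tendsto_of_le_of_le tendsto_const_nhds hlim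
    (fun n => zero_le) ha4).comp hns.tendsto_atTop

lemma norm_cu (u : R2 → R2) (x : R2) : ‖cu u x‖ = ‖u x‖ := by
  rw [Complex.norm_def, EuclideanSpace.norm_eq, Complex.normSq_apply]
  simp [cu, sq]

lemma ibp_normsq {a : R2 → ℂ} (ha : ContDiff ℝ (⊤ : ℕ∞) a) {φ : R2 → ℝ}
    (hφ : ContDiff ℝ (⊤ : ℕ∞) φ) (hφc : HasCompactSupport φ) (v : R2) :
    ∫ x, ‖a x‖ ^ 2 * fderiv ℝ φ x v = - ∫ x, 2 * inner ℝ (a x) (fderiv ℝ a x v) * φ x := by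
  have hφ' : Continuous fun x => fderiv ℝ φ x v :=
    (hφ.continuous_fderiv (by simp)).clm_apply continuous_const
  have hφ'c : HasCompactSupport fun x => fderiv ℝ φ x v := hφc.fderiv_apply (𝕜 := ℝ) v
  have ha' : Continuous fun x => fderiv ℝ a x v :=
    (ha.continuous_fderiv (by simp)).clm_apply continuous_const
  have hac := ha.continuous
  have hφcont := hφ.continuous
  have hd : ∀ x, fderiv ℝ (fun x => ‖a x‖ ^ 2) x v = 2 * inner ℝ (a x) (fderiv ℝ a x v) := by
    intro x
    have h := (ha.differentiable (by simp) x).hasFDerivAt.norm_sq.fderiv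
    rw [h]
    simp
    try ring
  have := integral_mul_fderiv_eq_neg_fderiv_mul_of_integrable (μ := (volume : Measure R2))
    (f := fun x => ‖a x‖ ^ 2) (g := φ) (v := v) ?_ ?_ ?_ ?_ ?_
  · simp_rw [hd] at this
    exact this
  · simp_rw [hd]
    refine Continuous.integrable_of_hasCompactSupport (by fun_prop) hφc.mul_left
  · exact Continuous.integrable_of_hasCompactSupport (by fun_prop) hφ'c.mul_left
  · exact Continuous.integrable_of_hasCompactSupport (by fun_prop) hφc.mul_left
  · intro x _
    exact (ha.differentiable (by simp) x).norm_sq ℝ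
  · intro x _
    exact hφ.differentiable (by simp) x

theorem tangent {Ω : Set R2} (hΩo : IsOpen Ω) (hΩb : Bornology.IsBounded Ω)
    {u : R2 → R2} {G : R2 → Matrix (Fin 2) (Fin 2) ℝ}
    (hu : MemW11 Ω u G) (hS : SphereValued Ω u) {a : ℕ → R2 → ℂ}
    (ha1 : ∀ n, ContDiff ℝ (⊤ : ℕ∞) (a n)) (ha2 : ∀ n x, ‖a n x‖ ≤ 1)
    (ha3 : ∀ᵐ x ∂(volume.restrict Ω), Tendsto (fun n => a n x) atTop (𝓝 (cu u x)))
    (ha4 : Tendsto (fun n => ∫⁻ x in Ω, ‖gr (a n) x - cG G x‖ₑ) atTop (𝓝 0)) :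
    ∀ᵐ x ∂(volume.restrict Ω), ∀ j, inner ℝ (cu u x) (cG G x j) = 0 := by
  rw [ae_all_iff]
  intro j
  set v : R2 := EuclideanSpace.single j 1 with hv
  set h : R2 → ℂ := fun x => cG G x j with hh
  have hhi : Integrable h (volume.restrict Ω) := cGj_integrable hu.2.1 j
  have hum : AEStronglyMeasurable (cu u) (volume.restrict Ω) := (cu_integrable hu.1).1
  have hinn : Integrable (fun x => inner ℝ (cu u x) (h x)) (volume.restrict Ω) := by
    refine hhi.mono (hum.inner hhi.1) ?_
    filter_upwards [hS] with x hx
    calc ‖inner ℝ (cu u x) (h x)‖ ≤ ‖cu u x‖ * ‖h x‖ := norm_inner_le_norm _ _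
      _ = ‖h x‖ := by rw [norm_cu, hx, one_mul]
  rw [ae_restrict_iff' hΩo.measurableSet]
  refine hΩo.ae_eq_zero_of_integral_contDiff_smul_eq_zero (f := fun x => inner ℝ (cu u x) (h x))
    (IntegrableOn.locallyIntegrableOn hinn) ?_
  intro φ hφ hφc hφs
  have hφ' : Continuous fun x => fderiv ℝ φ x v :=
    (hφ.continuous_fderiv (by simp)).clm_apply continuous_const
  have hφ'c : HasCompactSupport fun x => fderiv ℝ φ x v := hφc.fderiv_apply (𝕜 := ℝ) v
  obtain ⟨M, hM⟩ := hφc.exists_bound_of_continuous hφ.continuous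
  have hM0 : 0 ≤ M := (norm_nonneg _).trans (hM 0)
  have hφ0 : ∀ x ∉ Ω, φ x = 0 := fun x hx => image_eq_zero_of_notMem_tsupport fun h => hx (hφs h)
  have hφ'0 : ∀ x ∉ Ω, fderiv ℝ φ x v = 0 := fun x hx => by
    have : x ∉ tsupport (fderiv ℝ φ) := fun h => hx (hφs (tsupport_fderiv_subset ℝ h))
    rw [image_eq_zero_of_notMem_tsupport this]
    rfl
  -- the identity for the approximations
  have key : ∀ n, ∫ x in Ω, ‖a n x‖ ^ 2 * fderiv ℝ φ x v =
      - (2 * ((∫ x in Ω, inner ℝ (a n x) (h x) * φ x) +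
        ∫ x in Ω, inner ℝ (a n x) (fderiv ℝ (a n) x v - h x) * φ x)) := by
    intro n
    have h1 := ibp_normsq (ha1 n) hφ hφc v
    have r1 := setIntegral_eq_integral_of_forall_compl_eq_zero (μ := (volume : Measure R2)) (s := Ω)
      (f := fun x => ‖a n x‖ ^ 2 * fderiv ℝ φ x v)
      (fun x hx => by rw [hφ'0 x hx, mul_zero])
    have r2 := setIntegral_eq_integral_of_forall_compl_eq_zero (μ := (volume : Measure R2)) (s := Ω)
      (f := fun x => 2 * inner ℝ (a n x) (fderiv ℝ (a n) x v) * φ x)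
      (fun x hx => by rw [hφ0 x hx, mul_zero])
    rw [r1, h1, ← r2]
    have hac := (ha1 n).continuous
    have ha' : Continuous fun x => fderiv ℝ (a n) x v :=
      ((ha1 n).continuous_fderiv (by simp)).clm_apply continuous_const
    have hφcont := hφ.continuous
    have i1 : Integrable (fun x => inner ℝ (a n x) (h x) * φ x) (volume.restrict Ω) := by
      refine (hhi.norm.mul_const M).mono
        ((hac.aestronglyMeasurable.inner hhi.1).mul hφcont.aestronglyMeasurable) ?_
      refine Eventually.of_forall fun x => ?_
      rw [norm_mul, norm_mul, norm_norm, Real.norm_of_nonneg hM0]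
      gcongr
      · calc ‖inner ℝ (a n x) (h x)‖ ≤ ‖a n x‖ * ‖h x‖ := norm_inner_le_norm _ _
          _ ≤ ‖h x‖ := mul_le_of_le_one_left (norm_nonneg _) (ha2 n x)
      · exact hM x
    have i2 : Integrable (fun x => inner ℝ (a n x) (fderiv ℝ (a n) x v) * φ x)
        (volume.restrict Ω) :=
      (Continuous.integrable_of_hasCompactSupport (by fun_prop) hφc.mul_left).integrableOn
    have e : ∀ x, inner ℝ (a n x) (fderiv ℝ (a n) x v - h x) * φ x =
        inner ℝ (a n x) (fderiv ℝ (a n) x v) * φ x - inner ℝ (a n x) (h x) * φ x := by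
      intro x
      rw [inner_sub_right, sub_mul]
    simp_rw [e]
    rw [integral_sub i2 i1, add_sub_cancel, ← integral_const_mul]
    congr 1
    refine integral_congr_ae (Eventually.of_forall fun x => ?_)
    show 2 * _ * _ = 2 * (_ * _)
    ring
  have L1 : Tendsto (fun n => ∫ x in Ω, ‖a n x‖ ^ 2 * fderiv ℝ φ x v) atTop
      (𝓝 (∫ x in Ω, fderiv ℝ φ x v)) := by
    refine tendsto_integral_of_dominated_convergence (fun x => ‖fderiv ℝ φ x v‖) ?_ ?_ ?_ ?_
    · intro n
      have hac := (ha1 n).continuous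
      exact (by fun_prop : Continuous fun x => ‖a n x‖ ^ 2 * fderiv ℝ φ x v).aestronglyMeasurable
    · exact (hφ'.integrable_of_hasCompactSupport hφ'c).norm.integrableOn
    · intro n
      refine Eventually.of_forall fun x => ?_
      rw [norm_mul]
      refine mul_le_of_le_one_left (norm_nonneg _) ?_
      rw [norm_pow, norm_norm]
      exact pow_le_one₀ (norm_nonneg _) (ha2 n x)
    · filter_upwards [ha3, hS] with x hx hx1
      have := ((hx.norm.pow 2).mul_const (fderiv ℝ φ x v))
      rw [norm_cu, hx1, one_pow, one_mul] at this
      exact this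
  have L0 : ∫ x in Ω, fderiv ℝ φ x v = 0 := by
    have h1 := ibp_normsq (a := fun _ => (1:ℂ)) contDiff_const hφ hφc v
    simp at h1
    rw [setIntegral_eq_integral_of_forall_compl_eq_zero hφ'0]
    exact h1
  have L2 : Tendsto (fun n => ∫ x in Ω, inner ℝ (a n x) (h x) * φ x) atTop
      (𝓝 (∫ x in Ω, inner ℝ (cu u x) (h x) * φ x)) := by
    refine tendsto_integral_of_dominated_convergence (fun x => ‖h x‖ * M) ?_ ?_ ?_ ?_
    · intro n
      exact ((ha1 n).continuous.aestronglyMeasurable.inner hhi.1).mul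
        hφ.continuous.aestronglyMeasurable
    · exact hhi.norm.mul_const M
    · intro n
      refine Eventually.of_forall fun x => ?_
      rw [norm_mul]
      gcongr
      · calc ‖inner ℝ (a n x) (h x)‖ ≤ ‖a n x‖ * ‖h x‖ := norm_inner_le_norm _ _
          _ ≤ ‖h x‖ := mul_le_of_le_one_left (norm_nonneg _) (ha2 n x)
      · exact hM x
    · filter_upwards [ha3] with x hx
      exact (hx.inner tendsto_const_nhds).mul_const _
  have L3 : Tendsto (fun n => ∫ x in Ω, inner ℝ (a n x) (fderiv ℝ (a n) x v - h x) * φ x) atTop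
      (𝓝 0) := by
    rw [tendsto_zero_iff_enorm_tendsto_zero]
    have hb : Tendsto (fun n => (∫⁻ x in Ω, ‖gr (a n) x - cG G x‖ₑ) * ENNReal.ofReal M) atTop
        (𝓝 0) := by
      have := ENNReal.Tendsto.mul_const (b := ENNReal.ofReal M) ha4 (Or.inr (by simp))
      simpa using this
    refine tendsto_of_tendsto_of_tendsto_of_le_of_le tendsto_const_nhds hb (fun n => zero_le) ?_
    intro n
    refine (enorm_integral_le_lintegral_enorm _).trans ?_
    show _ ≤ (∫⁻ x in Ω, ‖gr (a n) x - cG G x‖ₑ) * ENNReal.ofReal M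
    rw [← lintegral_mul_const' _ _ ENNReal.ofReal_ne_top]
    refine lintegral_mono fun x => ?_
    rw [enorm_mul]
    gcongr
    · rw [← ofReal_norm, ← ofReal_norm]
      apply ENNReal.ofReal_le_ofReal
      calc ‖inner ℝ (a n x) (fderiv ℝ (a n) x v - h x)‖
          ≤ ‖a n x‖ * ‖fderiv ℝ (a n) x v - h x‖ := norm_inner_le_norm _ _
        _ ≤ ‖fderiv ℝ (a n) x v - h x‖ := mul_le_of_le_one_left (norm_nonneg _) (ha2 n x)
        _ = ‖(gr (a n) x - cG G x) j‖ := rfl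
        _ ≤ _ := PiLp.norm_apply_le _ j
    · rw [← ofReal_norm]
      exact ENNReal.ofReal_le_ofReal (hM x)
  have L4 := ((L2.add L3).const_mul 2).neg
  have L5 := tendsto_nhds_unique (L1.congr key) L4
  rw [L0] at L5
  have L6 : ∫ x in Ω, inner ℝ (cu u x) (h x) * φ x = 0 := by linarith
  rw [← setIntegral_eq_integral_of_forall_compl_eq_zero (s := Ω)
    (fun x hx => by rw [hφ0 x hx, zero_smul])]
  rw [← L6]
  refine integral_congr_ae (Eventually.of_forall fun x => ?_)
  show φ x • _ = _ * _
  rw [smul_eq_mul, mul_comm]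

/-! ### Projection onto the circle -/

lemma invnorm_bound : ∃ K : ℝ≥0∞, K ≠ ⊤ ∧ ∀ z : ℂ,
    ∫⁻ y in ball (0:ℂ) 1, ENNReal.ofReal (‖z - y‖⁻¹) ≤ K := by
  have h1 : IntegrableOn (fun x : ℂ => ‖x‖⁻¹) (ball (0:ℂ) 1) := by
    rw [integrableOn_fun_norm_addHaar volume (f := fun r : ℝ => r⁻¹)]
    rw [Complex.finrank_real_complex]
    have : IntegrableOn (fun _ : ℝ => (1:ℝ)) (Ioo (0:ℝ) 1) := by
      rw [integrableOn_const_iff]; simp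
    refine this.congr_fun (fun y hy => ?_) measurableSet_Ioo
    have := hy.1.ne'
    simp [this]
  have h2 : ∫⁻ y in ball (0:ℂ) 1, ENNReal.ofReal (‖y‖⁻¹) ≠ ⊤ := by
    have := h1.lintegral_lt_top
    exact this.ne
  have h3 : volume (ball (0:ℂ) 1) ≠ ⊤ := measure_ball_lt_top.ne
  refine ⟨(∫⁻ y in ball (0:ℂ) 1, ENNReal.ofReal (‖y‖⁻¹)) + volume (ball (0:ℂ) 1),
    ENNReal.add_ne_top.2 ⟨h2, h3⟩, fun z => ?_⟩
  have hm : Measurable fun y : ℂ => ENNReal.ofReal (‖z - y‖⁻¹) := by fun_prop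
  have hm0 : Measurable fun y : ℂ => ENNReal.ofReal (‖y‖⁻¹) := by fun_prop
  calc ∫⁻ y in ball (0:ℂ) 1, ENNReal.ofReal (‖z - y‖⁻¹)
      ≤ ∫⁻ y in ball (0:ℂ) 1,
        ((ball (0:ℂ) 1).indicator (fun w => ENNReal.ofReal (‖w‖⁻¹)) (z - y) + 1) := by
        refine lintegral_mono fun y => ?_
        by_cases hy : z - y ∈ ball (0:ℂ) 1
        · rw [indicator_of_mem hy]; exact le_self_add
        · rw [indicator_of_notMem hy, zero_add]
          rw [mem_ball_zero_iff, not_lt] at hy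
          rw [ENNReal.ofReal_le_one]
          exact inv_le_one_of_one_le₀ hy
    _ = (∫⁻ y in ball (0:ℂ) 1,
        (ball (0:ℂ) 1).indicator (fun w => ENNReal.ofReal (‖w‖⁻¹)) (z - y))
          + volume (ball (0:ℂ) 1) := by
        rw [lintegral_add_right _ measurable_const]; simp
    _ ≤ _ := by
        refine add_le_add ?_ le_rfl
        refine (setLIntegral_le_lintegral _ _).trans ?_
        rw [lintegral_sub_left_eq_self
          (fun w => (ball (0:ℂ) 1).indicator (fun w => ENNReal.ofReal (‖w‖⁻¹)) w) z,
          lintegral_indicator measurableSet_ball]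

lemma select {μ : Measure R2} [SFinite μ] {η : ℝ} (hη : 0 < η) (hη1 : η ≤ 1) :
    ∃ K : ℝ≥0∞, K ≠ ⊤ ∧ ∀ (a : R2 → ℂ) (_ : Continuous a) (D : R2 → ℝ≥0∞) (_ : AEMeasurable D μ)
      (N : Set ℂ) (_ : volume N = 0), ∃ y ∉ N, ‖y‖ < η ∧
      ∫⁻ x, (ENNReal.ofReal (‖a x - y‖⁻¹) + 2) * D x ∂μ ≤ K * ∫⁻ x, D x ∂μ := by
  obtain ⟨K, hK, hKb⟩ := invnorm_bound
  have hv0 : volume (ball (0:ℂ) η) ≠ 0 := (measure_ball_pos _ _ hη).ne'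
  have hvt : volume (ball (0:ℂ) η) ≠ ⊤ := measure_ball_lt_top.ne
  have hsub : ball (0:ℂ) η ⊆ ball 0 1 := ball_subset_ball hη1
  refine ⟨(K + 2 * volume (ball (0:ℂ) η)) / volume (ball (0:ℂ) η), ?_, ?_⟩
  · refine ENNReal.div_ne_top (ENNReal.add_ne_top.2 ⟨hK, ENNReal.mul_ne_top (by simp) hvt⟩) hv0
  intro a ha D hD N hN
  set ν : Measure ℂ := volume.restrict (ball (0:ℂ) η) with hν
  have hνN : ν (N ∪ (ball (0:ℂ) η)ᶜ) = 0 := by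
    refine measure_union_null ?_ ?_
    · exact Measure.restrict_le_self.absolutelyContinuous hN
    · rw [hν, Measure.restrict_apply measurableSet_ball.compl]; simp
  have : IsFiniteMeasure ν :=
    ⟨by rw [hν, Measure.restrict_apply_univ]; exact hvt.lt_top⟩
  have hν0 : ν ≠ 0 := by
    rw [hν, Ne, Measure.restrict_eq_zero]; exact hv0
  have hm : Measurable fun p : ℂ × R2 => ENNReal.ofReal (‖a p.2 - p.1‖⁻¹) + 2 := by
    have : Continuous fun p : ℂ × R2 => a p.2 - p.1 := by fun_prop
    have := this.measurable
    fun_prop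
  have hfm : AEMeasurable (Function.uncurry fun (y : ℂ) (x : R2) =>
      (ENNReal.ofReal (‖a x - y‖⁻¹) + 2) * D x) (ν.prod μ) :=
    hm.aemeasurable.mul hD.comp_snd
  obtain ⟨y, hy, hyb⟩ := exists_notMem_null_le_laverage (μ := ν)
    (f := fun y => ∫⁻ x, (ENNReal.ofReal (‖a x - y‖⁻¹) + 2) * D x ∂μ) hν0
    (hfm.lintegral_prod_right') hνN
  rw [mem_union, not_or, mem_compl_iff, not_not, mem_ball_zero_iff] at hy
  refine ⟨y, hy.1, hy.2, hyb.trans ?_⟩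
  rw [laverage_eq, lintegral_lintegral_swap hfm, mul_comm, ← mul_div_assoc, mul_comm]
  have : ν univ = volume (ball (0:ℂ) η) := by simp [hν]
  rw [this]
  gcongr
  rw [← lintegral_const_mul'' _ hD]
  refine lintegral_mono fun x => ?_
  simp only
  rw [lintegral_mul_const _ (by fun_prop)]
  gcongr
  rw [lintegral_add_right _ measurable_const]
  simp only [lintegral_const, this]
  gcongr
  exact (lintegral_mono_set hsub).trans (hKb _)

lemma sard {a : R2 → ℂ} (ha : ContDiff ℝ (⊤ : ℕ∞) a) :
    ∃ N : Set ℂ, volume N = 0 ∧ ∀ y ∉ N, ∀ K : Set R2, IsCompact K → {x ∈ K | a x = y}.Finite := by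
  let e := Complex.orthonormalBasisOneI.repr
  let f : R2 → R2 := fun x => e (a x)
  let f' : R2 → R2 →L[ℝ] R2 := fun x => (e.toContinuousLinearEquiv : ℂ →L[ℝ] R2) ∘L fderiv ℝ a x
  have hf : ∀ x, HasFDerivAt f (f' x) x := fun x =>
    (e.toContinuousLinearEquiv : ℂ →L[ℝ] R2).hasFDerivAt.comp x
      (ha.differentiable (by simp) x).hasFDerivAt
  set s : Set R2 := {x | (f' x).det = 0} with hs
  have h0 : volume (f '' s) = 0 := addHaar_image_eq_zero_of_det_fderivWithin_eq_zero volume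
    (fun x _ => (hf x).hasFDerivWithinAt) (fun x hx => hx)
  refine ⟨e ⁻¹' (f '' s), e.measurePreserving.quasiMeasurePreserving.preimage_null h0, ?_⟩
  intro y hy K hK
  by_contra hinf
  obtain ⟨x, hxK, hx⟩ := Set.Infinite.exists_accPt_of_subset_isCompact hinf hK (sep_subset _ _)
  have hc : IsClosed {x | a x = y} := isClosed_eq ha.continuous continuous_const
  have hx' : AccPt x (𝓟 {x | a x = y}) := hx.mono (by
    rw [principal_mono]; exact fun z hz => hz.2)
  have hax : a x = y := by
    have := hx'.clusterPt.mem_closure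
    rwa [hc.closure_eq] at this
  have hd : (f' x).det ≠ 0 := fun h => hy ⟨x, h, by simp [f, hax]⟩
  have hne : ∀ᶠ z in 𝓝[≠] x, f z ≠ e y := by
    refine (hf x).eventually_ne ?_
    let E := (f' x).toContinuousLinearEquivOfDetNeZero hd
    exact ⟨_, E.antilipschitz⟩
  rw [accPt_iff_frequently_nhdsNE] at hx'
  refine hx' (hne.mono fun z hz hzy => hz ?_)
  show e (a z) = e y
  rw [hzy]

/-- componentwise conjugation -/
def cj (h : E2) : E2 := WithLp.toLp 2 fun j => (starRingEnd ℂ) (h j)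

lemma norm_cj (h : E2) : ‖cj h‖ = ‖h‖ := by
  simp [EuclideanSpace.norm_eq, cj]

lemma cj_sub (h k : E2) : cj (h - k) = cj h - cj k := by
  ext j; simp [cj]

def TT (q : ℂ) (h : E2) : E2 :=
  ((‖q‖⁻¹ / 2 : ℝ) : ℂ) • (h - (q * (‖q‖⁻¹ : ℝ)) ^ 2 • cj h)

lemma tangent_repr {U : ℂ} (hU : ‖U‖ = 1) {H : E2} (hH : ∀ j, inner ℝ U (H j) = 0) :
    H = (1 / 2 : ℂ) • (H - U ^ 2 • cj H) := by
  ext j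
  have h := hH j
  have h1 : U.re * U.re + U.im * U.im = 1 := by
    have := Complex.normSq_eq_norm_sq U
    rw [hU, Complex.normSq_apply] at this
    simpa using this
  rw [Complex.inner] at h
  simp only [Complex.mul_re, Complex.conj_re, Complex.conj_im] at h
  simp only [cj, PiLp.smul_apply, PiLp.sub_apply, smul_eq_mul]
  apply Complex.ext
  · simp [pow_two]
    linear_combination (-(H j).re / 2) * h1 + U.re * h
  · simp [pow_two]
    linear_combination (-(H j).im / 2) * h1 + U.im * h

lemma gr_proj {a : R2 → ℂ} {x : R2} (ha : DifferentiableAt ℝ a x) (hx : a x ≠ 0) :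
    gr (fun x => a x * (‖a x‖⁻¹ : ℝ)) x = TT (a x) (gr a x) := by
  have hn : ‖a x‖ ≠ 0 := norm_ne_zero_iff.2 hx
  have h1 : HasFDerivAt (fun x => ‖a x‖ ^ 2) (2 • (innerSL ℝ (a x)).comp (fderiv ℝ a x)) x :=
    ha.hasFDerivAt.norm_sq
  have h2 : HasFDerivAt (fun x => ‖a x‖) ((1 / (2 * ‖a x‖)) •
      (2 • (innerSL ℝ (a x)).comp (fderiv ℝ a x))) x := by
    have := h1.sqrt (by positivity)
    simpa [Real.sqrt_sq (norm_nonneg _)] using this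
  have h3 := (hasDerivAt_inv hn).comp_hasFDerivAt x h2
  have h4 := Complex.ofRealCLM.hasFDerivAt.comp x h3
  have h5 := ha.hasFDerivAt.mul' h4
  ext j
  have : (fun x => a x * ((‖a x‖⁻¹ : ℝ) : ℂ)) = fun x => a x * (Complex.ofRealCLM ∘ Inv.inv ∘ fun x => ‖a x‖) x := by
    ext x; simp
  rw [gr, this]
  simp only
  erw [h5.fderiv]
  set h := fderiv ℝ a x (EuclideanSpace.single j 1) with hh
  have hg : gr a x j = h := rfl
  simp only [TT, cj, PiLp.smul_apply, PiLp.sub_apply, smul_eq_mul, hg]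
  simp [Complex.inner, ← hh]
  have hnC : (‖a x‖ : ℂ) ≠ 0 := by exact_mod_cast hn
  have hn2 : (‖a x‖ : ℂ) ^ 2 = a x * (starRingEnd ℂ) (a x) := (Complex.mul_conj' (a x)).symm
  have hin : (h.re : ℂ) * (a x).re + (h.im : ℂ) * (a x).im =
      (h * (starRingEnd ℂ) (a x) + a x * (starRingEnd ℂ) h) / 2 := by
    apply Complex.ext <;> simp <;> ring
  have e1 : ∀ n : ℂ, n ≠ 0 → n ^ 2 = a x * (starRingEnd ℂ) (a x) →
      -(a x * ((n ^ 2)⁻¹ * (n⁻¹ * 2⁻¹ * (2 * (h.re * (a x).re))) +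
            (n ^ 2)⁻¹ * (n⁻¹ * 2⁻¹ * (2 * (h.im * (a x).im))))) + h * n⁻¹ =
      n⁻¹ / 2 * (h - (a x * n⁻¹) ^ 2 * (starRingEnd ℂ) h) := by
    intro n hn hn2
    have : a x * ((n ^ 2)⁻¹ * (n⁻¹ * 2⁻¹ * (2 * (h.re * (a x).re))) +
            (n ^ 2)⁻¹ * (n⁻¹ * 2⁻¹ * (2 * (h.im * (a x).im)))) =
        a x * ((n ^ 2)⁻¹ * n⁻¹ * (h.re * (a x).re + h.im * (a x).im)) := by ring
    rw [this, hin]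
    field_simp
    linear_combination h * hn2
  exact e1 _ hnC hn2

lemma norm_TT_le (q : ℂ) (h : E2) : ‖TT q h‖ ≤ ‖q‖⁻¹ * ‖h‖ := by
  have h1 : ‖(q * (‖q‖⁻¹ : ℝ))‖ ≤ 1 := by
    rw [norm_mul, Complex.norm_real, norm_inv, norm_norm]
    exact mul_inv_le_one
  rw [TT, norm_smul, Complex.norm_real, Real.norm_of_nonneg (by positivity)]
  have : ‖h - (q * (‖q‖⁻¹ : ℝ)) ^ 2 • cj h‖ ≤ 2 * ‖h‖ := by
    refine (norm_sub_le _ _).trans ?_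
    rw [norm_smul, norm_cj, norm_pow]
    have := pow_le_one₀ (n := 2) (norm_nonneg _) h1
    nlinarith [norm_nonneg h]
  calc _ ≤ ‖q‖⁻¹ / 2 * (2 * ‖h‖) := by gcongr
    _ = _ := by ring

lemma norm_proj_sub {q U : ℂ} (hq : q ≠ 0) (hU : ‖U‖ = 1) :
    ‖U - q * (‖q‖⁻¹ : ℝ)‖ ≤ 2 * ‖q - U‖ := by
  have hn : ‖q‖ ≠ 0 := norm_ne_zero_iff.2 hq
  have e : U - q * (‖q‖⁻¹ : ℝ) = (U - q) + q * ((1 - ‖q‖⁻¹ : ℝ) : ℂ) := by push_cast; ring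
  rw [e]
  refine (norm_add_le _ _).trans ?_
  rw [norm_mul, Complex.norm_real, norm_sub_rev U q]
  have : ‖q‖ * ‖1 - ‖q‖⁻¹‖ = |‖q‖ - ‖U‖| := by
    rw [hU, ← abs_of_nonneg (norm_nonneg q), Real.norm_eq_abs, ← abs_mul, abs_of_nonneg (norm_nonneg q)]
    congr 1
    field_simp
  rw [this]
  have := abs_norm_sub_norm_le q U
  linarith

lemma TT_sub_le {q U : ℂ} (hq : q ≠ 0) (hU : ‖U‖ = 1) {g H : E2}
    (hH : ∀ j, inner ℝ U (H j) = 0) :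
    ‖TT q g - H‖ ≤ ‖q‖⁻¹ * ‖g - H‖ + (‖q‖⁻¹ + 2) * ‖q - U‖ * ‖H‖ := by
  have hn : ‖q‖ ≠ 0 := norm_ne_zero_iff.2 hq
  set σ : ℂ := q * (‖q‖⁻¹ : ℝ) with hσ
  have hσ1 : ‖σ‖ = 1 := by
    rw [hσ, norm_mul, Complex.norm_real, norm_inv, norm_norm, mul_inv_cancel₀ hn]
  have e : TT q g - H = TT q (g - H) + ((((‖q‖⁻¹ - 1) / 2 : ℝ) : ℂ) • (H - σ ^ 2 • cj H)
      + ((1 / 2 : ℂ) * (U ^ 2 - σ ^ 2)) • cj H) := by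
    conv_lhs => rw [tangent_repr hU hH]
    ext j
    simp only [TT, cj, PiLp.smul_apply, PiLp.sub_apply, PiLp.add_apply, smul_eq_mul, ← hσ, map_sub]
    push_cast
    ring
  rw [e]
  have h1 := norm_TT_le q (g - H)
  have h2 : ‖(((‖q‖⁻¹ - 1) / 2 : ℝ) : ℂ) • (H - σ ^ 2 • cj H)‖ ≤ ‖q‖⁻¹ * ‖q - U‖ * ‖H‖ := by
    rw [norm_smul, Complex.norm_real]
    have h3 : ‖H - σ ^ 2 • cj H‖ ≤ 2 * ‖H‖ := by
      refine (norm_sub_le _ _).trans ?_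
      rw [norm_smul, norm_cj, norm_pow, hσ1]
      linarith
    have h4 : ‖(‖q‖⁻¹ - 1) / 2‖ ≤ ‖q‖⁻¹ * ‖q - U‖ / 2 := by
      have : (‖q‖⁻¹ - 1) / 2 = ‖q‖⁻¹ * (‖U‖ - ‖q‖) / 2 := by
        rw [hU]; field_simp
      rw [this, norm_div, norm_mul, norm_inv, norm_norm, Real.norm_eq_abs, Real.norm_eq_abs, abs_two,
        norm_sub_rev]
      gcongr
      exact abs_norm_sub_norm_le U q
    calc _ ≤ (‖q‖⁻¹ * ‖q - U‖ / 2) * (2 * ‖H‖) := by gcongr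
      _ = _ := by ring
  have h3 : ‖((1 / 2 : ℂ) * (U ^ 2 - σ ^ 2)) • cj H‖ ≤ 2 * ‖q - U‖ * ‖H‖ := by
    rw [norm_smul, norm_cj]
    gcongr
    have : (1 / 2 : ℂ) * (U ^ 2 - σ ^ 2) = (1 / 2 : ℂ) * ((U + σ) * (U - σ)) := by ring
    rw [this, norm_mul, norm_mul]
    have h5 : ‖U + σ‖ ≤ 2 := by
      refine (norm_add_le _ _).trans ?_
      rw [hU, hσ1]; norm_num
    have h6 := norm_proj_sub hq hU
    rw [← hσ] at h6
    have : ‖(1/2 : ℂ)‖ = 1/2 := by simp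
    rw [this]
    calc _ ≤ 1 / 2 * (2 * (2 * ‖q - U‖)) := by gcongr
      _ = _ := by ring
  calc _ ≤ _ := norm_add_le _ _
    _ ≤ ‖TT q (g - H)‖ + (_ + _) := by gcongr; exact norm_add_le _ _
    _ ≤ _ := by linarith

lemma pt_est {a y U : ℂ} (hq : a - y ≠ 0) (hU : ‖U‖ = 1) {η : ℝ} (hη : η ≤ 1 / 4) (hy : ‖y‖ < η)
    {g H : E2} (hH : ∀ j, inner ℝ U (H j) = 0) :
    ‖TT (a - y) g - H‖ ≤ (‖a - y‖⁻¹ + 2) * (‖g - H‖ + 2 * ‖a - U‖ * ‖H‖) + 6 * η * ‖H‖ := by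
  refine (TT_sub_le hq hU hH).trans ?_
  have hη0 : 0 < η := (norm_nonneg y).trans_lt hy
  set s := ‖a - y‖⁻¹ with hs
  have hs0 : 0 ≤ s := by positivity
  have h1 : ‖a - y - U‖ ≤ ‖a - U‖ + η := by
    calc ‖a - y - U‖ = ‖(a - U) - y‖ := by congr 1; ring
      _ ≤ ‖a - U‖ + ‖y‖ := norm_sub_le _ _
      _ ≤ _ := by linarith
  have h2 : (s + 2) * η ≤ (s + 2) * ‖a - U‖ + 6 * η := by
    by_cases h : 1 / 2 ≤ ‖a‖
    · have : 1 / 4 ≤ ‖a - y‖ := by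
        have := norm_sub_norm_le a y
        linarith
      have hs4 : s ≤ 4 := by
        rw [hs]
        calc ‖a - y‖⁻¹ ≤ (1/4 : ℝ)⁻¹ := by gcongr
          _ = 4 := by norm_num
      have : 0 ≤ (s + 2) * ‖a - U‖ := by positivity
      nlinarith
    · have : 1 / 2 ≤ ‖a - U‖ := by
        have := norm_sub_norm_le U a
        rw [norm_sub_rev] at this
        linarith [not_le.1 h]
      have : (s + 2) * η ≤ (s + 2) * ‖a - U‖ := by gcongr; linarith
      linarith
  have h3 : (s + 2) * ‖a - y - U‖ ≤ 2 * ((s + 2) * ‖a - U‖) + 6 * η := by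
    have : (s + 2) * ‖a - y - U‖ ≤ (s + 2) * (‖a - U‖ + η) := by gcongr
    linarith
  have h4 : (s + 2) * ‖a - y - U‖ * ‖H‖ ≤ (2 * ((s + 2) * ‖a - U‖) + 6 * η) * ‖H‖ := by gcongr
  have : 0 ≤ ‖g - H‖ := norm_nonneg _
  nlinarith

theorem proj_exists {Ω : Set R2} (hΩo : IsOpen Ω) (hΩb : Bornology.IsBounded Ω)
    {u : R2 → R2} {G : R2 → Matrix (Fin 2) (Fin 2) ℝ}
    (hu : MemW11 Ω u G) (hS : SphereValued Ω u) {a : ℕ → R2 → ℂ}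
    (ha1 : ∀ n, ContDiff ℝ (⊤ : ℕ∞) (a n)) (ha2 : ∀ n x, ‖a n x‖ ≤ 1)
    (ha3 : ∀ᵐ x ∂(volume.restrict Ω), Tendsto (fun n => a n x) atTop (𝓝 (cu u x)))
    (ha4 : Tendsto (fun n => ∫⁻ x in Ω, ‖gr (a n) x - cG G x‖ₑ) atTop (𝓝 0))
    {ε : ℝ≥0∞} (hε : ε ≠ 0) :
    ∃ (C : Set R2) (p : R2 → ℂ), C ⊆ Ω ∧ C.Finite ∧ ContDiffOn ℝ 1 p (Ω \ C) ∧
      (∀ x ∈ Ω \ C, ‖p x‖ = 1) ∧ ∫⁻ x in Ω, ‖gr p x - cG G x‖ₑ ≤ ε ∧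
      ∫⁻ x in Ω, ‖cu u x - p x‖ₑ * ‖gr p x‖ₑ ≤ ε := by
  have htan := tangent hΩo hΩb hu hS ha1 ha2 ha3 ha4
  set μ := volume.restrict Ω with hμ
  have hHi : Integrable (cG G) μ := cG_integrable hu.2.1
  have hUm : AEStronglyMeasurable (cu u) μ := (cu_integrable hu.1).1
  set I : ℝ≥0∞ := ∫⁻ x, ‖cG G x‖ₑ ∂μ with hI
  have hIt : I ≠ ⊤ := hHi.2.ne
  -- choose η
  obtain ⟨η, hη0, hη4, hηI⟩ : ∃ η : ℝ, 0 < η ∧ η ≤ 1 / 4 ∧ ENNReal.ofReal (6 * η) * I ≤ ε / 6 := by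
    have h1 : Tendsto (fun η : ℝ => ENNReal.ofReal (6 * η) * I) (𝓝[>] 0) (𝓝 0) := by
      have h2 : Tendsto (fun η : ℝ => ENNReal.ofReal (6 * η)) (𝓝[>] 0) (𝓝 0) := by
        have : Continuous fun η : ℝ => ENNReal.ofReal (6 * η) :=
          ENNReal.continuous_ofReal.comp (continuous_const.mul continuous_id)
        simpa using (this.tendsto 0).mono_left nhdsWithin_le_nhds
      simpa using ENNReal.Tendsto.mul_const h2 (Or.inr hIt)
    have h3 : 0 < ε / 6 := ENNReal.div_pos hε (by simp)
    have h4 := h1.eventually (Iic_mem_nhds h3)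
    have h5 : ∀ᶠ η : ℝ in 𝓝[>] 0, η ≤ 1 / 4 :=
      nhdsWithin_le_nhds (Iic_mem_nhds (by norm_num))
    obtain ⟨η, h⟩ := (h4.and (h5.and self_mem_nhdsWithin)).exists
    exact ⟨η, h.2.2, h.2.1, h.1⟩
  obtain ⟨K, hK, hsel⟩ := select (μ := μ) hη0 (by linarith)
  -- choose n
  let D : ℕ → R2 → ℝ≥0∞ := fun n x => ‖gr (a n) x - cG G x‖ₑ + 2 * ‖a n x - cu u x‖ₑ * ‖cG G x‖ₑ
  have hm1 : ∀ n, AEMeasurable (fun x => ‖gr (a n) x - cG G x‖ₑ) μ := fun n =>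
    ((gr_cont (ha1 n)).aestronglyMeasurable.sub hHi.1).enorm
  have hm2 : ∀ n, AEMeasurable (fun x => ‖a n x - cu u x‖ₑ * ‖cG G x‖ₑ) μ := fun n =>
    (((ha1 n).continuous.aestronglyMeasurable.sub hUm).enorm).mul hHi.1.enorm
  have hDm : ∀ n, AEMeasurable (D n) μ := fun n => by
    have : D n = fun x => ‖gr (a n) x - cG G x‖ₑ + 2 * (‖a n x - cu u x‖ₑ * ‖cG G x‖ₑ) := by
      ext x; simp only [D]; ring
    rw [this]
    exact (hm1 n).add ((hm2 n).const_mul 2)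
  have hD2 : Tendsto (fun n => ∫⁻ x, ‖a n x - cu u x‖ₑ * ‖cG G x‖ₑ ∂μ) atTop (𝓝 0) := by
    have := tendsto_lintegral_of_dominated_convergence' (μ := μ)
      (F := fun n x => ‖a n x - cu u x‖ₑ * ‖cG G x‖ₑ) (f := fun _ => 0)
      (fun x => 2 * ‖cG G x‖ₑ) hm2 ?_ ?_ ?_
    · simpa using this
    · intro n
      filter_upwards [hS] with x hx
      gcongr
      refine (enorm_sub_le).trans ?_
      have h1 : ‖a n x‖ₑ ≤ 1 := by
        rw [← ofReal_norm]; exact ENNReal.ofReal_le_one.2 (ha2 n x)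
      have h2 : ‖cu u x‖ₑ ≤ 1 := by
        rw [← ofReal_norm]; exact ENNReal.ofReal_le_one.2 (by rw [norm_cu, hx])
      calc _ ≤ (1:ℝ≥0∞) + 1 := by gcongr
        _ = 2 := by norm_num
    · rw [lintegral_const_mul'' _ hHi.1.enorm]
      exact ENNReal.mul_ne_top (by simp) hIt
    · filter_upwards [ha3] with x hx
      have h1 : Tendsto (fun n => ‖a n x - cu u x‖ₑ) atTop (𝓝 0) := by
        have : Tendsto (fun n => a n x - cu u x) atTop (𝓝 0) := by
          simpa using hx.sub_const (cu u x)
        simpa using this.enorm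
      simpa using ENNReal.Tendsto.mul_const h1 (Or.inr enorm_ne_top)
  have hD : Tendsto (fun n => K * ∫⁻ x, D n x ∂μ) atTop (𝓝 0) := by
    have h1 : ∀ n, ∫⁻ x, D n x ∂μ = (∫⁻ x, ‖gr (a n) x - cG G x‖ₑ ∂μ) +
        2 * ∫⁻ x, ‖a n x - cu u x‖ₑ * ‖cG G x‖ₑ ∂μ := by
      intro n
      rw [← lintegral_const_mul'' _ (hm2 n), ← lintegral_add_left' (hm1 n)]
      simp only [D, mul_assoc]
    simp_rw [h1]
    have h2 := ENNReal.Tendsto.const_mul (a := 2) hD2 (Or.inr (by simp))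
    have h3 := ENNReal.Tendsto.const_mul (a := K) (ha4.add h2) (Or.inr hK)
    simpa using h3
  have h3 : 0 < ε / 6 := ENNReal.div_pos hε (by simp)
  obtain ⟨n, hn⟩ := (hD.eventually (Iic_mem_nhds h3)).exists
  obtain ⟨N, hN, hNf⟩ := sard (ha1 n)
  obtain ⟨y, hyN, hyη, hyI⟩ := hsel (a n) (ha1 n).continuous (D n) (hDm n) N hN
  set q : R2 → ℂ := fun x => a n x - y with hq
  set p : R2 → ℂ := fun x => q x * (‖q x‖⁻¹ : ℝ) with hp
  set C : Set R2 := {x ∈ Ω | a n x = y} with hC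
  have hCf : C.Finite := by
    refine (hNf y hyN (closure Ω) hΩb.isCompact_closure).subset ?_
    exact fun x hx => ⟨subset_closure hx.1, hx.2⟩
  have hqc : ContDiff ℝ 1 q := ((ha1 n).of_le (by exact_mod_cast le_top)).sub contDiff_const
  have hq0 : ∀ x ∈ Ω \ C, q x ≠ 0 := by
    intro x hx h
    exact hx.2 ⟨hx.1, sub_eq_zero.1 h⟩
  have hR : ∀ᵐ x ∂μ, x ∈ Ω \ C := by
    have h1 : ∀ᵐ x ∂μ, x ∈ Ω := ae_restrict_mem hΩo.measurableSet
    have h2 : ∀ᵐ x ∂μ, x ∉ C := by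
      refine ae_restrict_of_ae ?_
      exact measure_eq_zero_iff_ae_notMem.1 (hCf.measure_zero volume)
    filter_upwards [h1, h2] with x h h' using ⟨h, h'⟩
  let R : R2 → ℝ≥0∞ := fun x => (ENNReal.ofReal (‖a n x - y‖⁻¹) + 2) * D n x +
    ENNReal.ofReal (6 * η) * ‖cG G x‖ₑ
  have hRi : ∫⁻ x, R x ∂μ ≤ ε / 3 := by
    rw [lintegral_add_right' _ (hHi.1.enorm.const_mul _), lintegral_const_mul'' _ hHi.1.enorm]
    calc _ ≤ ε / 6 + ε / 6 := add_le_add (hyI.trans hn) hηI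
      _ = 2 * ε / 6 := by rw [two_mul, ENNReal.add_div]
      _ = ε / 3 := by
        rw [show (6:ℝ≥0∞) = 2 * 3 by norm_num]
        exact ENNReal.mul_div_mul_left _ _ (by simp) (by simp)
  have hDr : ∀ x, D n x = ENNReal.ofReal (‖gr (a n) x - cG G x‖ +
      2 * ‖a n x - cu u x‖ * ‖cG G x‖) := by
    intro x
    rw [ENNReal.ofReal_add (by positivity) (by positivity), ENNReal.ofReal_mul (by positivity),
      ENNReal.ofReal_mul (by positivity)]
    simp only [ofReal_norm, D]
    simp
  have hRr : ∀ x, R x = ENNReal.ofReal ((‖a n x - y‖⁻¹ + 2) * (‖gr (a n) x - cG G x‖ +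
      2 * ‖a n x - cu u x‖ * ‖cG G x‖) + 6 * η * ‖cG G x‖) := by
    intro x
    rw [ENNReal.ofReal_add (by positivity) (by positivity), ENNReal.ofReal_mul (by positivity),
      ENNReal.ofReal_mul (p := 6 * η) (by positivity), ENNReal.ofReal_add (by positivity) (by norm_num),
      ← hDr]
    simp only [ofReal_norm, R]
    simp
  have key : ∀ᵐ x ∂μ, ‖gr p x - cG G x‖ₑ ≤ R x ∧ ‖cu u x - p x‖ₑ * ‖gr p x‖ₑ ≤ 3 * R x := by
    filter_upwards [hR, hS, htan] with x hx hSx hTx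
    have hU : ‖cu u x‖ = 1 := by rw [norm_cu, hSx]
    have hgq : gr q x = gr (a n) x := by
      ext j
      simp only [gr, hq]
      rw [fderiv_sub_const]
    have hgp : gr p x = TT (q x) (gr (a n) x) := by
      rw [← hgq]
      exact gr_proj (hqc.differentiable (by norm_num) x) (hq0 x hx)
    have e1 := pt_est (hq0 x hx) hU hη4 hyη (g := gr (a n) x) hTx
    have e2 := e1
    rw [show TT (a n x - y) (gr (a n) x) = gr p x from hgp.symm] at e2
    have e3 := norm_proj_sub (hq0 x hx) hU
    have hp1 : ‖p x‖ = 1 := by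
      rw [hp, norm_mul, Complex.norm_real, norm_inv, norm_norm,
        mul_inv_cancel₀ (norm_ne_zero_iff.2 (hq0 x hx))]
    refine ⟨?_, ?_⟩
    · rw [hRr, ← ofReal_norm]
      exact ENNReal.ofReal_le_ofReal e2
    · rw [hRr, ← ofReal_norm, ← ofReal_norm, ← ENNReal.ofReal_mul (norm_nonneg _),
        show (3:ℝ≥0∞) = ENNReal.ofReal 3 by simp, ← ENNReal.ofReal_mul (by norm_num)]
      apply ENNReal.ofReal_le_ofReal
      set X := (‖a n x - y‖⁻¹ + 2) * (‖gr (a n) x - cG G x‖ +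
        2 * ‖a n x - cu u x‖ * ‖cG G x‖) + 6 * η * ‖cG G x‖ with hX
      have f1 : ‖cu u x - p x‖ ≤ 2 := by
        refine (norm_sub_le _ _).trans ?_
        rw [hU, hp1]; norm_num
      have f2 : ‖cu u x - p x‖ ≤ 2 * (‖a n x - cu u x‖ + η) := by
        refine e3.trans ?_
        gcongr
        calc ‖a n x - y - cu u x‖ = ‖(a n x - cu u x) - y‖ := by congr 1; ring
          _ ≤ ‖a n x - cu u x‖ + ‖y‖ := norm_sub_le _ _
          _ ≤ _ := by linarith
      have f3 : ‖gr p x‖ ≤ ‖gr p x - cG G x‖ + ‖cG G x‖ := by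
        have := norm_sub_norm_le (gr p x) (cG G x)
        linarith
      have f4 : 2 * (‖a n x - cu u x‖ + η) * ‖cG G x‖ ≤ X := by
        have g1 : (1:ℝ) * (0 + 2 * ‖a n x - cu u x‖ * ‖cG G x‖) ≤ (‖a n x - y‖⁻¹ + 2) *
          (‖gr (a n) x - cG G x‖ + 2 * ‖a n x - cu u x‖ * ‖cG G x‖) := by
          gcongr
          · have : 0 ≤ ‖a n x - y‖⁻¹ := by positivity
            linarith
          · positivity
        have g2 : 0 ≤ η * ‖cG G x‖ := by positivity
        nlinarith
      calc ‖cu u x - p x‖ * ‖gr p x‖ ≤ ‖cu u x - p x‖ * (‖gr p x - cG G x‖ + ‖cG G x‖) := by gcongr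
        _ = ‖cu u x - p x‖ * ‖gr p x - cG G x‖ + ‖cu u x - p x‖ * ‖cG G x‖ := by ring
        _ ≤ 2 * X + 2 * (‖a n x - cu u x‖ + η) * ‖cG G x‖ := by gcongr
        _ ≤ 3 * X := by linarith
  refine ⟨C, p, sep_subset _ _, hCf, ?_, ?_, ?_, ?_⟩
  · intro x hx
    have h0 : ‖q x‖ ≠ 0 := norm_ne_zero_iff.2 (hq0 x hx)
    refine ContDiffAt.contDiffWithinAt ?_
    have h1 : ContDiffAt ℝ 1 q x := hqc.contDiffAt
    have h2 : ContDiffAt ℝ 1 (fun x => ‖q x‖⁻¹) x := (h1.norm ℝ (hq0 x hx)).inv h0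
    exact h1.mul (Complex.ofRealCLM.contDiff.contDiffAt.comp x h2)
  · intro x hx
    rw [hp, norm_mul, Complex.norm_real, norm_inv, norm_norm,
        mul_inv_cancel₀ (norm_ne_zero_iff.2 (hq0 x hx))]
  · refine (lintegral_mono_ae (key.mono fun x h => h.1)).trans (hRi.trans ?_)
    exact ENNReal.div_le_of_le_mul (by
      calc ε = ε * 1 := by simp
        _ ≤ ε * 3 := by gcongr; norm_num)
  · refine (lintegral_mono_ae (key.mono fun x h => h.2)).trans ?_
    rw [lintegral_const_mul' _ _ (by simp)]
    calc _ ≤ 3 * (ε / 3) := by gcongr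
      _ = ε := ENNReal.mul_div_cancel (by simp) (by simp)

/-! ### A family of circle valued maps -/

def rr (l : ℝ) : ℝ := Real.sqrt (1 + l ^ 2)
def cc (l : ℝ) : ℂ := ⟨1 / rr l, l / rr l⟩
def XX (l : ℝ) (z : ℂ) : ℝ := (z.re + l * z.im) / rr l
def YY (l : ℝ) (z : ℂ) : ℝ := (z.im - l * z.re) / rr l
def AA (l t : ℝ) (z : ℂ) : ℝ := (z.re ^ 2 + z.im ^ 2 + 1) / 2 - XX l z + t
def ZZ (l t : ℝ) (z : ℂ) : ℂ := (YY l z : ℂ) + (AA l t z : ℂ) * Complex.I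
def FF (l t : ℝ) (z : ℂ) : ℂ := cc l * (ZZ l t z * ((starRingEnd ℂ) (ZZ l t z))⁻¹)
def GG (l t : ℝ) (z : ℂ) : ℝ :=
  2 * (|YY l z| * ‖z - cc l‖ + AA l t z) / (YY l z ^ 2 + AA l t z ^ 2)

lemma rr_pos (l : ℝ) : 0 < rr l := Real.sqrt_pos.2 (by positivity)
lemma rr_sq (l : ℝ) : rr l ^ 2 = 1 + l ^ 2 := Real.sq_sqrt (by positivity)

lemma rr_cont : Continuous rr := by unfold rr; fun_prop

lemma rr_ne (l : ℝ) : rr l ≠ 0 := (rr_pos l).ne'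

lemma norm_cc (l : ℝ) : ‖cc l‖ = 1 := by
  have h := rr_sq l
  have h0 := rr_ne l
  have : ‖cc l‖ ^ 2 = 1 := by
    rw [← Complex.normSq_eq_norm_sq, Complex.normSq_apply]
    simp only [cc]
    field_simp
    linarith
  nlinarith [norm_nonneg (cc l)]

lemma dist_cc (l : ℝ) (z : ℂ) : ‖z - cc l‖ ^ 2 = z.re ^ 2 + z.im ^ 2 + 1 - 2 * XX l z := by
  have h := rr_sq l
  have h0 := rr_ne l
  rw [← Complex.normSq_eq_norm_sq, Complex.normSq_apply]
  simp only [cc, XX, Complex.sub_re, Complex.sub_im]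
  field_simp
  linear_combination -h

lemma AA_eq (l t : ℝ) (z : ℂ) : AA l t z = ‖z - cc l‖ ^ 2 / 2 + t := by
  rw [dist_cc, AA]; ring

lemma XX_YY (l : ℝ) (z : ℂ) : XX l z ^ 2 + YY l z ^ 2 = z.re ^ 2 + z.im ^ 2 := by
  have h := rr_sq l
  have h0 := rr_ne l
  simp only [XX, YY]
  field_simp
  rw [h]; ring

lemma AA_pos {l t : ℝ} (ht : 0 < t) (z : ℂ) : 0 < AA l t z := by
  rw [AA_eq]; positivity

lemma GG_nonneg {l t : ℝ} (ht : 0 < t) (z : ℂ) : 0 ≤ GG l t z := by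
  have := AA_pos (l := l) ht z
  unfold GG; positivity

lemma ZZ_ne {l t : ℝ} (ht : 0 < t) (z : ℂ) : ZZ l t z ≠ 0 := by
  intro h
  have := congrArg Complex.im h
  simp [ZZ] at this
  exact (AA_pos ht z).ne' this

lemma FF_cont {t : ℝ} (ht : 0 < t) : Continuous fun q : ℝ × ℂ => FF q.1 t q.2 := by
  have h0 := rr_ne
  have hr := rr_cont
  have hre := Complex.continuous_re
  have him := Complex.continuous_im
  have hX : Continuous fun q : ℝ × ℂ => XX q.1 q.2 := by
    unfold XX
    exact Continuous.div (by fun_prop) (by fun_prop) (fun q => h0 _)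
  have hY : Continuous fun q : ℝ × ℂ => YY q.1 q.2 := by
    unfold YY
    exact Continuous.div (by fun_prop) (by fun_prop) (fun q => h0 _)
  have hA : Continuous fun q : ℝ × ℂ => AA q.1 t q.2 := by
    unfold AA; fun_prop
  have hZ : Continuous fun q : ℝ × ℂ => ZZ q.1 t q.2 := by
    unfold ZZ; fun_prop
  have hc : Continuous cc := by
    have : cc = fun l => ((1 / rr l : ℝ) : ℂ) + ((l / rr l : ℝ) : ℂ) * Complex.I := by
      ext l; apply Complex.ext <;> simp [cc]
    rw [this]
    have h1 : Continuous fun l => 1 / rr l := Continuous.div (by fun_prop) hr h0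
    have h2 : Continuous fun l => l / rr l := Continuous.div (by fun_prop) hr h0
    fun_prop
  unfold FF
  refine Continuous.mul (by fun_prop) (hZ.mul (Continuous.inv₀ (by fun_prop) fun q => ?_))
  simpa using ZZ_ne ht q.2

lemma GG_cont {t : ℝ} (ht : 0 < t) : Continuous fun q : ℝ × ℂ => GG q.1 t q.2 := by
  have h0 := rr_ne
  have hr := rr_cont
  have hre := Complex.continuous_re
  have him := Complex.continuous_im
  have hX : Continuous fun q : ℝ × ℂ => XX q.1 q.2 := by
    unfold XX
    exact Continuous.div (by fun_prop) (by fun_prop) (fun q => h0 _)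
  have hY : Continuous fun q : ℝ × ℂ => YY q.1 q.2 := by
    unfold YY
    exact Continuous.div (by fun_prop) (by fun_prop) (fun q => h0 _)
  have hA : Continuous fun q : ℝ × ℂ => AA q.1 t q.2 := by
    unfold AA; fun_prop
  have hc : Continuous cc := by
    have : cc = fun l => ((1 / rr l : ℝ) : ℂ) + ((l / rr l : ℝ) : ℂ) * Complex.I := by
      ext l; apply Complex.ext <;> simp [cc]
    rw [this]
    have h1 : Continuous fun l => 1 / rr l := Continuous.div (by fun_prop) hr h0
    have h2 : Continuous fun l => l / rr l := Continuous.div (by fun_prop) hr h0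
    fun_prop
  unfold GG
  refine Continuous.div (by fun_prop) (by fun_prop) fun q => ?_
  have := AA_pos (l := q.1) ht q.2
  positivity

lemma norm_FF {l t : ℝ} (ht : 0 < t) (z : ℂ) : ‖FF l t z‖ = 1 := by
  have := norm_ne_zero_iff.2 (ZZ_ne (l := l) ht z)
  rw [FF, norm_mul, norm_cc, norm_mul, norm_inv, RCLike.norm_conj, mul_inv_cancel₀ this, one_mul]

/-- the limit as `t → 0` -/
lemma FF_tendsto {l : ℝ} {z : ℂ} (hz : ‖z‖ = 1) (hzc : z ≠ cc l) {t : ℕ → ℝ} {w : ℕ → ℂ}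
    (ht : Tendsto t atTop (𝓝 0)) (hw : Tendsto w atTop (𝓝 z)) :
    Tendsto (fun k => FF l (t k) (w k)) atTop (𝓝 z) := by
  have hre := Complex.continuous_re
  have him := Complex.continuous_im
  have hd : 0 < ‖z - cc l‖ ^ 2 := by
    have := norm_pos_iff.2 (sub_ne_zero.2 hzc)
    positivity
  have h1 : z.re ^ 2 + z.im ^ 2 = 1 := by
    have := Complex.normSq_eq_norm_sq z
    rw [hz, Complex.normSq_apply] at this
    linarith
  have hA : AA l 0 z = 1 - XX l z := by rw [AA, h1]; ring
  have hA0 : 0 < AA l 0 z := by rw [AA_eq]; linarith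
  have hZ0 : ZZ l 0 z ≠ 0 := by
    intro h
    have := congrArg Complex.im h
    simp [ZZ] at this
    exact hA0.ne' this
  have hZc : Continuous fun q : ℝ × ℂ => ZZ l q.1 q.2 := by
    unfold ZZ AA XX YY
    fun_prop
  have hval : FF l 0 z = z := by
    have hXY := XX_YY l z
    rw [h1] at hXY
    have e1 : ZZ l 0 z = ((XX l z : ℂ) + (YY l z : ℂ) * Complex.I) * (starRingEnd ℂ) (ZZ l 0 z) := by
      simp only [ZZ, hA, map_add, map_mul, Complex.conj_ofReal, Complex.conj_I]
      apply Complex.ext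
      · simp; linear_combination 0 * hXY
      · simp; linear_combination -hXY
    have e2 : ZZ l 0 z * ((starRingEnd ℂ) (ZZ l 0 z))⁻¹ = (XX l z : ℂ) + (YY l z : ℂ) * Complex.I := by
      rw [mul_inv_eq_iff_eq_mul₀ (by simpa using hZ0)]
      exact e1
    rw [FF, e2]
    have h := rr_sq l
    have h0 := rr_ne l
    apply Complex.ext
    · simp [cc, XX, YY]
      field_simp
      rw [h]; ring
    · simp [cc, XX, YY]
      field_simp
      rw [h]; ring
  have hcont : ContinuousAt (fun q : ℝ × ℂ => FF l q.1 q.2) (0, z) := by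
    unfold FF
    refine ContinuousAt.mul continuousAt_const (hZc.continuousAt.mul (ContinuousAt.inv₀ ?_ ?_))
    · exact (Complex.continuous_conj.comp hZc).continuousAt
    · simpa using hZ0
  have := hcont.tendsto.comp (ht.prodMk_nhds hw)
  simpa [hval, Function.comp_def] using this

lemma FF_contDiff {l t : ℝ} (ht : 0 < t) : ContDiff ℝ 1 (FF l t) := by
  have hre : ContDiff ℝ 1 Complex.re := Complex.reCLM.contDiff
  have him : ContDiff ℝ 1 Complex.im := Complex.imCLM.contDiff
  have hof : ContDiff ℝ 1 Complex.ofReal := Complex.ofRealCLM.contDiff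
  have hX : ContDiff ℝ 1 (XX l) := by
    unfold XX
    exact (hre.add (contDiff_const.mul him)).div_const _
  have hY : ContDiff ℝ 1 (YY l) := by
    unfold YY
    exact (him.sub (contDiff_const.mul hre)).div_const _
  have hA : ContDiff ℝ 1 (AA l t) := by
    unfold AA
    exact (((((hre.pow 2).add (him.pow 2)).add contDiff_const).div_const _).sub hX).add contDiff_const
  have hZ : ContDiff ℝ 1 (ZZ l t) := by
    unfold ZZ
    exact (hof.comp hY).add ((hof.comp hA).mul contDiff_const)
  have hZc : ContDiff ℝ 1 (fun z => (starRingEnd ℂ) (ZZ l t z)) :=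
    Complex.conjCLE.contDiff.comp hZ
  unfold FF
  exact contDiff_const.mul (hZ.mul (hZc.inv fun z => by simpa using ZZ_ne ht z))

lemma FF_fderiv {l t : ℝ} (ht : 0 < t) (z h : ℂ) :
    ‖fderiv ℝ (FF l t) z h‖ ≤ GG l t z * ‖h‖ := by
  have hre : HasFDerivAt Complex.re Complex.reCLM z := Complex.reCLM.hasFDerivAt
  have him : HasFDerivAt Complex.im Complex.imCLM z := Complex.imCLM.hasFDerivAt
  -- one-dimensional derivative along the line
  have hγ : HasDerivAt (fun s : ℝ => z + s • h) h 0 := by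
    simpa using ((hasDerivAt_id (0:ℝ)).smul_const h).const_add z
  have hγre : HasDerivAt (fun s : ℝ => (z + s • h).re) h.re 0 := by
    simpa using (((hasDerivAt_id (0:ℝ)).mul_const h.re).const_add z.re)
  have hγim : HasDerivAt (fun s : ℝ => (z + s • h).im) h.im 0 := by
    simpa using (((hasDerivAt_id (0:ℝ)).mul_const h.im).const_add z.im)
  have hF : HasDerivAt (fun s : ℝ => FF l t (z + s • h)) (fderiv ℝ (FF l t) z h) 0 := by
    have h1 : DifferentiableAt ℝ (FF l t) (z + (0:ℝ) • h) :=
      (FF_contDiff ht).differentiable (by norm_num) _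
    have := h1.hasFDerivAt.comp_hasDerivAt (0:ℝ) hγ
    simpa [Function.comp_def] using this
  have hX : HasDerivAt (fun s : ℝ => XX l (z + s • h)) ((h.re + l * h.im) / rr l) 0 :=
    (hγre.add (hγim.const_mul l)).div_const _
  have hY : HasDerivAt (fun s : ℝ => YY l (z + s • h)) ((h.im - l * h.re) / rr l) 0 :=
    (hγim.sub (hγre.const_mul l)).div_const _
  have hA : HasDerivAt (fun s : ℝ => AA l t (z + s • h))
      (z.re * h.re + z.im * h.im - (h.re + l * h.im) / rr l) 0 := by
    have := (((((hγre.pow 2).add (hγim.pow 2)).add_const 1).div_const 2).sub hX).add_const t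
    refine HasDerivAt.congr_deriv this ?_
    simp only [zero_smul, add_zero]
    norm_num
    ring
  set y' := (h.im - l * h.re) / rr l with hy'
  set a' := z.re * h.re + z.im * h.im - (h.re + l * h.im) / rr l with ha'
  have hZ : HasDerivAt (fun s : ℝ => ZZ l t (z + s • h)) ((y' : ℂ) + (a' : ℂ) * Complex.I) 0 :=
    hY.ofReal_comp.add (hA.ofReal_comp.mul_const Complex.I)
  have hZc : HasDerivAt (fun s : ℝ => (starRingEnd ℂ) (ZZ l t (z + s • h)))
      ((starRingEnd ℂ) ((y' : ℂ) + (a' : ℂ) * Complex.I)) 0 := by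
    exact (Complex.conjCLE : ℂ →L[ℝ] ℂ).hasFDerivAt.comp_hasDerivAt (0:ℝ) hZ
  have hne : (starRingEnd ℂ) (ZZ l t z) ≠ 0 := by simpa using ZZ_ne ht z
  have hF2 := (hZ.mul (hZc.inv (by simpa using ZZ_ne (l := l) ht z))).const_mul (cc l)
  have heq := hF.unique hF2
  simp only [zero_smul, add_zero] at heq
  rw [heq, norm_mul, norm_cc, one_mul]
  set Y := YY l z with hYd
  set A := AA l t z with hAd
  have hApos : 0 < A := AA_pos ht z
  have hζ : ZZ l t z = (Y : ℂ) + (A : ℂ) * Complex.I := rfl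
  have e1 : ((y' : ℂ) + (a' : ℂ) * Complex.I) * ((starRingEnd ℂ) (ZZ l t z))⁻¹ +
      ZZ l t z * (-(starRingEnd ℂ) ((y' : ℂ) + (a' : ℂ) * Complex.I) /
        (starRingEnd ℂ) (ZZ l t z) ^ 2) =
      (2 * ((Y * a' - A * y' : ℝ) : ℂ) * Complex.I) / (starRingEnd ℂ) (ZZ l t z) ^ 2 := by
    field_simp
    rw [hζ]
    apply Complex.ext <;> simp <;> ring
  have e2 : ‖(starRingEnd ℂ) (ZZ l t z)‖ ^ 2 = Y ^ 2 + A ^ 2 := by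
    rw [RCLike.norm_conj, ← Complex.normSq_eq_norm_sq, hζ, Complex.normSq_add_mul_I]
  have e3 : |y'| ≤ ‖h‖ := by
    have h1 := XX_YY l h
    have : y' ^ 2 ≤ ‖h‖ ^ 2 := by
      rw [← Complex.normSq_eq_norm_sq, Complex.normSq_apply]
      have h3 : y' = YY l h := rfl
      rw [h3]
      nlinarith [sq_nonneg (XX l h)]
    exact abs_le_of_sq_le_sq this (norm_nonneg _)
  have e4 : |a'| ≤ ‖z - cc l‖ * ‖h‖ := by
    have : a' = inner ℝ (z - cc l) h := by
      rw [Complex.inner, ha']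
      simp [cc]
      ring
    rw [this]
    exact abs_real_inner_le_norm _ _
  show ‖_ * _ + _ * _‖ ≤ _
  have e0 : (fun s : ℝ => (starRingEnd ℂ) (ZZ l t (z + s • h)))⁻¹ 0 =
      ((starRingEnd ℂ) (ZZ l t z))⁻¹ := by simp
  rw [e0]
  rw [e1, norm_div, norm_pow, e2, GG, ← hYd, ← hAd]
  rw [norm_mul, norm_mul, Complex.norm_I, Complex.norm_real, mul_one, div_mul_eq_mul_div]
  have e5 : ‖Y * a' - A * y'‖ ≤ (|Y| * ‖z - cc l‖ + A) * ‖h‖ := by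
    calc ‖Y * a' - A * y'‖ ≤ ‖Y * a'‖ + ‖A * y'‖ := norm_sub_le _ _
      _ = |Y| * |a'| + A * |y'| := by
        rw [norm_mul, norm_mul, Real.norm_eq_abs, Real.norm_eq_abs, Real.norm_eq_abs, Real.norm_eq_abs,
          abs_of_pos hApos]
      _ ≤ |Y| * (‖z - cc l‖ * ‖h‖) + A * ‖h‖ := by gcongr
      _ = _ := by ring
  have : ‖(2:ℂ)‖ = 2 := by simp
  rw [this, mul_assoc]
  gcongr

lemma invsqrt_bound : ∃ K : ℝ≥0∞, K ≠ ⊤ ∧ ∀ m : ℝ,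
    ∫⁻ l in Ioc (-1/2 : ℝ) (1/2), ENNReal.ofReal ((Real.sqrt |m - l|)⁻¹) ≤ K := by
  have h1 : IntegrableOn (fun x : ℝ => (Real.sqrt |x|)⁻¹) (ball (0:ℝ) 1) := by
    have := integrableOn_fun_norm_addHaar (E := ℝ) volume (f := fun r : ℝ => (Real.sqrt r)⁻¹) (r := 1)
    simp only [Real.norm_eq_abs] at this
    rw [this]
    have h : IntegrableOn (fun x : ℝ => x ^ (-(1/2) : ℝ)) (Ioo (0:ℝ) 1) := by
      have h2 := intervalIntegral.intervalIntegrable_rpow' (a := 0) (b := 1) (r := -(1/2 : ℝ))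
        (by norm_num)
      rw [intervalIntegrable_iff_integrableOn_Ioo_of_le (by norm_num)] at h2
      exact h2
    refine h.congr_fun (fun y hy => ?_) measurableSet_Ioo
    simp only [Module.finrank_self]
    rw [Real.rpow_neg hy.1.le, ← Real.sqrt_eq_rpow]
    simp
  have h2 : ∫⁻ y in ball (0:ℝ) 1, ENNReal.ofReal ((Real.sqrt |y|)⁻¹) ≠ ⊤ :=
    h1.lintegral_lt_top.ne
  refine ⟨(∫⁻ y in ball (0:ℝ) 1, ENNReal.ofReal ((Real.sqrt |y|)⁻¹)) + 1,
    ENNReal.add_ne_top.2 ⟨h2, by simp⟩, fun z => ?_⟩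
  calc ∫⁻ l in Ioc (-1/2 : ℝ) (1/2), ENNReal.ofReal ((Real.sqrt |z - l|)⁻¹)
      ≤ ∫⁻ y in Ioc (-1/2 : ℝ) (1/2),
        ((ball (0:ℝ) 1).indicator (fun w => ENNReal.ofReal ((Real.sqrt |w|)⁻¹)) (z - y) + 1) := by
        refine lintegral_mono fun y => ?_
        by_cases hy : z - y ∈ ball (0:ℝ) 1
        · rw [indicator_of_mem hy]; exact le_self_add
        · rw [indicator_of_notMem hy, zero_add]
          rw [mem_ball_zero_iff, not_lt, Real.norm_eq_abs] at hy
          rw [ENNReal.ofReal_le_one]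
          exact inv_le_one_of_one_le₀ (Real.one_le_sqrt.2 hy)
    _ = (∫⁻ y in Ioc (-1/2 : ℝ) (1/2),
        (ball (0:ℝ) 1).indicator (fun w => ENNReal.ofReal ((Real.sqrt |w|)⁻¹)) (z - y)) + 1 := by
        rw [lintegral_add_right _ measurable_const]
        congr 1
        simp
        norm_num
    _ ≤ _ := by
        refine add_le_add ?_ le_rfl
        refine (setLIntegral_le_lintegral _ _).trans ?_
        rw [lintegral_sub_left_eq_self
          (fun w => (ball (0:ℝ) 1).indicator (fun w => ENNReal.ofReal ((Real.sqrt |w|)⁻¹)) w) z,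
          lintegral_indicator measurableSet_ball]

lemma term_one {l t : ℝ} (ht : 0 < t) (hl : l ∈ Icc (-1/2 : ℝ) (1/2)) (z : ℂ) :
    |YY l z| * ‖z - cc l‖ / (YY l z ^ 2 + AA l t z ^ 2) ≤
      2 + 2 * (Real.sqrt |z.im / z.re - l|)⁻¹ := by
  set d := ‖z - cc l‖ with hd
  set Y := YY l z with hY
  have hA : 0 < AA l t z := AA_pos ht z
  have hA2 : d ^ 2 / 2 ≤ AA l t z := by rw [AA_eq]; linarith
  set A := AA l t z with hAd
  have hd0 : 0 ≤ d := norm_nonneg _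
  have hN : 0 ≤ (Real.sqrt |z.im / z.re - l|)⁻¹ := by positivity
  have hQ : 0 < Y ^ 2 + A ^ 2 := by positivity
  by_cases h : 1 / 2 ≤ d
  · have : |Y| * d / (Y ^ 2 + A ^ 2) ≤ 2 := by
      rw [div_le_iff₀ hQ]
      have h1 : |Y| * d ^ 2 ≤ Y ^ 2 + A ^ 2 := by
        have : |Y| * (d ^ 2 / 2) ≤ |Y| * A := by gcongr
        nlinarith [sq_nonneg (|Y| - A), sq_abs Y]
      have h2 : |Y| * d ≤ 2 * (|Y| * d ^ 2) := by
        have : 0 ≤ |Y| * d := by positivity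
        nlinarith
      linarith
    linarith
  · push Not at h
    by_cases hY0 : Y = 0
    · rw [hY0]; simp; positivity
    set s := |Y| with hs
    have hs0 : 0 < s := abs_pos.2 hY0
    set σ := Real.sqrt s with hσ
    have hσ0 : 0 < σ := Real.sqrt_pos.2 hs0
    have hσs : σ ^ 2 = s := Real.sq_sqrt hs0.le
    have h1 : s * d / (Y ^ 2 + A ^ 2) ≤ σ⁻¹ := by
      rw [div_le_iff₀ hQ, inv_mul_eq_div, le_div_iff₀ hσ0]
      have e1 : Y ^ 2 = σ ^ 4 := by
        rw [← sq_abs, ← hs, ← hσs]; ring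
      have e2 : d ^ 4 / 4 ≤ A ^ 2 := by
        have : (d ^ 2 / 2) ^ 2 ≤ A ^ 2 := by gcongr
        linarith [this, (by ring : (d ^ 2 / 2) ^ 2 = d ^ 4 / 4)]
      have e3 : 0 ≤ (σ - d) ^ 2 * (3 * σ ^ 2 + 2 * σ * d + d ^ 2) := by positivity
      rw [e1, ← hσs]
      nlinarith [pow_pos hσ0 4]
    -- lower bound on `s`
    have hr := rr_pos l
    have hr2 := rr_sq l
    have hr54 : rr l ≤ 6 / 5 := by
      have : rr l ^ 2 ≤ 5 / 4 := by rw [hr2]; nlinarith [hl.1, hl.2]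
      nlinarith
    have hre : 1 / 3 ≤ z.re := by
      have e1 : |z.re - (cc l).re| ≤ d := by
        rw [← Complex.sub_re]; exact Complex.abs_re_le_norm _
      have e2 : 5 / 6 ≤ (cc l).re := by
        simp only [cc]
        rw [le_div_iff₀ hr]; linarith
      have := abs_le.1 e1
      linarith [this.1]
    have hlow : |z.im / z.re - l| / 4 ≤ s := by
      have e : Y = (z.im / z.re - l) * (z.re / rr l) := by
        rw [hY, YY]; field_simp
      rw [hs, e, abs_mul, div_eq_mul_inv]
      gcongr
      rw [abs_of_nonneg (by positivity), le_div_iff₀ hr]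
      linarith
    have hm : 0 < |z.im / z.re - l| := by
      rw [abs_pos]
      intro h0
      apply hY0
      have e : Y = (z.im / z.re - l) * (z.re / rr l) := by
        rw [hY, YY]; field_simp
      rw [e, h0, zero_mul]
    have h2 : σ⁻¹ ≤ 2 * (Real.sqrt |z.im / z.re - l|)⁻¹ := by
      have e1 : Real.sqrt (|z.im / z.re - l| / 4) ≤ σ := Real.sqrt_le_sqrt hlow
      have e2 : Real.sqrt (|z.im / z.re - l| / 4) = Real.sqrt |z.im / z.re - l| / 2 := by
        rw [Real.sqrt_div (abs_nonneg _), show (4:ℝ) = 2 ^ 2 by norm_num,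
          Real.sqrt_sq (by norm_num)]
      rw [e2] at e1
      have e3 : 0 < Real.sqrt |z.im / z.re - l| := Real.sqrt_pos.2 hm
      calc σ⁻¹ ≤ (Real.sqrt |z.im / z.re - l| / 2)⁻¹ := by gcongr
        _ = _ := by rw [inv_div]; ring
    linarith

def DD' (l t : ℝ) (z : ℂ) : ℝ :=
  (YY l z ^ 2 - AA l t z * XX l z) / (rr l ^ 2 * (YY l z ^ 2 + AA l t z ^ 2))

lemma term_two {l t : ℝ} (ht : 0 < t) (hl : l ∈ Icc (-1/2 : ℝ) (1/2)) {z : ℂ} (hz : ‖z‖ ≤ 1) :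
    AA l t z / (YY l z ^ 2 + AA l t z ^ 2) ≤ 52 - 4 * DD' l t z := by
  have hA : 0 < AA l t z := AA_pos ht z
  have hAe := AA_eq l t z
  have hdc := dist_cc l z
  have hXY := XX_YY l z
  have hz2 : z.re ^ 2 + z.im ^ 2 ≤ 1 := by
    have := Complex.normSq_eq_norm_sq z
    rw [Complex.normSq_apply] at this
    nlinarith [norm_nonneg z]
  rw [DD']
  set X := XX l z
  set Y := YY l z
  set A := AA l t z
  have hr : 1 ≤ rr l ^ 2 := by rw [rr_sq]; nlinarith
  have hr' : rr l ^ 2 ≤ 2 := by rw [rr_sq]; nlinarith [hl.1, hl.2]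
  set r := rr l ^ 2
  have hQ : 0 < Y ^ 2 + A ^ 2 := by positivity
  set Q := Y ^ 2 + A ^ 2 with hQd
  have hX1 : -1 ≤ X := by nlinarith [sq_nonneg Y]
  have hrQ : 0 < r * Q := by positivity
  rw [div_le_iff₀ hQ]
  have e : (52 - 4 * ((Y ^ 2 - A * X) / (r * Q))) * Q = 52 * Q - 4 * (Y ^ 2 - A * X) / r := by
    field_simp
  rw [e]
  have hYr : 4 * (Y ^ 2 - A * X) / r = 4 * Y ^ 2 / r - 4 * A * X / r := by ring
  rw [hYr]
  have h1 : 4 * Y ^ 2 / r ≤ 4 * Q := by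
    rw [div_le_iff₀ (by positivity)]
    have : Y ^ 2 ≤ Q := by rw [hQd]; nlinarith
    nlinarith [sq_nonneg Y]
  by_cases hX : 1 / 2 ≤ X
  · have h2 : A ≤ 4 * A * X / r := by
      rw [le_div_iff₀ (by positivity)]
      nlinarith
    linarith
  · push Not at hX
    have hA8 : 1 / 8 ≤ A := by
      rw [hAe, hdc]; nlinarith [sq_nonneg Y]
    have h2 : -(4 * A) ≤ 4 * A * X / r := by
      rw [le_div_iff₀ (by positivity)]
      nlinarith
    have h3 : A ≤ 8 * Q := by
      rw [hQd]; nlinarith [sq_nonneg Y]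
    linarith

lemma DD_deriv {t : ℝ} (ht : 0 < t) (z : ℂ) (l : ℝ) :
    HasDerivAt (fun l => Real.arctan (YY l z / AA l t z)) (DD' l t z) l := by
  have hr := rr_pos l
  have hr2 := rr_sq l
  have h1 : HasDerivAt rr (l / rr l) l := by
    have : HasDerivAt (fun l : ℝ => 1 + l ^ 2) (2 * l) l := by
      simpa using (hasDerivAt_pow 2 l).const_add 1
    have := this.sqrt (by positivity)
    refine this.congr_deriv ?_
    show 2 * l / (2 * rr l) = _
    field_simp
  have hX : HasDerivAt (fun l => XX l z) (YY l z / rr l ^ 2) l := by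
    have := (((hasDerivAt_id l).mul_const z.im).const_add z.re).div h1 hr.ne'
    refine this.congr_deriv ?_
    simp only [id, YY]
    field_simp
    rw [hr2]; ring
  have hY : HasDerivAt (fun l => YY l z) (- XX l z / rr l ^ 2) l := by
    have := (((hasDerivAt_id l).mul_const z.re).const_sub z.im).div h1 hr.ne'
    refine this.congr_deriv ?_
    simp only [id, XX]
    field_simp
    rw [hr2]; ring
  have hA : HasDerivAt (fun l => AA l t z) (- (YY l z / rr l ^ 2)) l :=
    (hX.const_sub _).add_const t
  have hAp := AA_pos (l := l) ht z
  have := (hY.div hA hAp.ne').arctan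
  refine this.congr_deriv ?_
  rw [DD']
  show 1 / (1 + (YY l z / AA l t z) ^ 2) * _ = _
  have hQ : 0 < YY l z ^ 2 + AA l t z ^ 2 := by positivity
  have hQ' : 0 < AA l t z ^ 2 + YY l z ^ 2 := by positivity
  field_simp
  ring

theorem GG_bound : ∃ C0 : ℝ≥0∞, C0 ≠ ⊤ ∧ ∀ t : ℝ, 0 < t → ∀ z : ℂ, ‖z‖ ≤ 1 →
    ∫⁻ l in Ioc (-1/2 : ℝ) (1/2), ENNReal.ofReal (GG l t z) ≤ C0 := by
  obtain ⟨K, hK, hKb⟩ := invsqrt_bound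
  refine ⟨4 * K + ENNReal.ofReal (108 + 8 * Real.pi),
    ENNReal.add_ne_top.2 ⟨ENNReal.mul_ne_top (by simp) hK, by simp⟩, ?_⟩
  intro t ht z hz
  have hc : Continuous fun l => DD' l t z := by
    have h0 := rr_ne
    have hr := rr_cont
    have hX : Continuous fun l => XX l z := by
      unfold XX
      exact Continuous.div (by fun_prop) (by fun_prop) (fun q => h0 _)
    have hY : Continuous fun l => YY l z := by
      unfold YY
      exact Continuous.div (by fun_prop) (by fun_prop) (fun q => h0 _)
    have hA : Continuous fun l => AA l t z := by
      unfold AA; fun_prop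
    unfold DD'
    refine Continuous.div (by fun_prop) (by fun_prop) fun l => ?_
    have := AA_pos (l := l) ht z
    have := rr_pos l
    positivity
  let m := z.im / z.re
  have hpt : ∀ l ∈ Ioc (-1/2 : ℝ) (1/2), ENNReal.ofReal (GG l t z) ≤
      4 * ENNReal.ofReal ((Real.sqrt |m - l|)⁻¹) + ENNReal.ofReal (108 - 8 * DD' l t z) := by
    intro l hl
    have hl' : l ∈ Icc (-1/2 : ℝ) (1/2) := ⟨hl.1.le, hl.2⟩
    have h1 := term_one ht hl' z
    have h2 := term_two ht hl' hz
    have hA := AA_pos (l := l) ht z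
    have h3 : 0 ≤ AA l t z / (YY l z ^ 2 + AA l t z ^ 2) := by positivity
    rw [show (4:ℝ≥0∞) = ENNReal.ofReal 4 by simp, ← ENNReal.ofReal_mul (by norm_num),
      ← ENNReal.ofReal_add (by positivity) (by linarith)]
    apply ENNReal.ofReal_le_ofReal
    have : GG l t z = 2 * (|YY l z| * ‖z - cc l‖ / (YY l z ^ 2 + AA l t z ^ 2)) +
        2 * (AA l t z / (YY l z ^ 2 + AA l t z ^ 2)) := by
      rw [GG]; ring
    rw [this]
    show _ ≤ 4 * (Real.sqrt |z.im / z.re - l|)⁻¹ + _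
    linarith
  have hm1 : Measurable fun l => 4 * ENNReal.ofReal ((Real.sqrt |m - l|)⁻¹) := by fun_prop
  have hm0 : Measurable fun l => ENNReal.ofReal ((Real.sqrt |m - l|)⁻¹) := by fun_prop
  refine (setLIntegral_mono' measurableSet_Ioc hpt).trans ?_
  rw [lintegral_add_left hm1, lintegral_const_mul _ hm0]
  refine add_le_add (by gcongr; exact hKb m) ?_
  have hIntg : IntegrableOn (fun l => 108 - 8 * DD' l t z) (Ioc (-1/2 : ℝ) (1/2)) := by
    have : Continuous fun l => 108 - 8 * DD' l t z := by fun_prop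
    exact (this.continuousOn.integrableOn_Icc).mono_set Ioc_subset_Icc_self
  have hnn : ∀ᵐ l ∂volume.restrict (Ioc (-1/2 : ℝ) (1/2)), 0 ≤ 108 - 8 * DD' l t z := by
    filter_upwards [ae_restrict_mem measurableSet_Ioc] with l hl
    have h2 := term_two ht ⟨hl.1.le, hl.2⟩ hz
    have hA := AA_pos (l := l) ht z
    have h3 : 0 ≤ AA l t z / (YY l z ^ 2 + AA l t z ^ 2) := by positivity
    linarith
  rw [← ofReal_integral_eq_lintegral_ofReal hIntg hnn]
  apply ENNReal.ofReal_le_ofReal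
  rw [← intervalIntegral.integral_of_le (by norm_num)]
  have hprim : ∀ l ∈ uIcc (-1/2 : ℝ) (1/2), HasDerivAt
      (fun l => 108 * l - 8 * Real.arctan (YY l z / AA l t z)) (108 - 8 * DD' l t z) l := by
    intro l _
    have := ((hasDerivAt_id l).const_mul 108).sub ((DD_deriv ht z l).const_mul 8)
    exact this.congr_deriv (by simp)
  rw [intervalIntegral.integral_eq_sub_of_hasDerivAt hprim
    (by exact (by fun_prop : Continuous fun l => 108 - 8 * DD' l t z).intervalIntegrable _ _)]
  have b1 := Real.neg_pi_div_two_lt_arctan (YY (1/2) z / AA (1/2) t z)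
  have b2 := Real.arctan_lt_pi_div_two (YY (-1/2) z / AA (-1/2) t z)
  linarith

lemma cc_inj {l m : ℝ} (h : cc l = cc m) : l = m := by
  have h1 : 1 / rr l = 1 / rr m := congrArg Complex.re h
  have h2 : l / rr l = m / rr m := congrArg Complex.im h
  have h3 : rr l = rr m := by
    have := rr_ne l; have := rr_ne m
    field_simp at h1
    exact h1.symm
  rw [h3] at h2
  have := rr_ne m
  field_simp at h2
  exact h2

lemma ne_cc_ae (z : ℂ) (ν : Measure ℝ) [NullSingletonClass ν] : ∀ᵐ l ∂ν, z ≠ cc l := by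
  have : ({l | z = cc l} : Set ℝ).Subsingleton := by
    intro a ha b hb
    exact cc_inj (ha.symm.trans hb)
  have h0 := this.measure_zero ν
  filter_upwards [measure_eq_zero_iff_ae_notMem.1 h0] with l hl using hl

lemma avg_select {μ : Measure R2} [IsFiniteMeasure μ] {w : ℕ → R2 → ℂ} {W : R2 → ℂ}
    {g : ℕ → R2 → ℝ≥0∞} (hw : ∀ k, AEStronglyMeasurable (w k) μ)
    (hw1 : ∀ k, ∀ᵐ x ∂μ, ‖w k x‖ ≤ 1) (hW : ∀ᵐ x ∂μ, ‖W x‖ = 1)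
    (hwW : ∀ᵐ x ∂μ, Tendsto (fun k => w k x) atTop (𝓝 (W x)))
    (hg : ∀ k, AEMeasurable (g k) μ) {B C0 : ℝ≥0∞} (hB0 : B ≠ 0) (hB : B ≠ ⊤) (hC0 : C0 ≠ ⊤)
    (hC : ∀ t : ℝ, 0 < t → ∀ z : ℂ, ‖z‖ ≤ 1 →
      ∫⁻ l in Ioc (-1/2 : ℝ) (1/2), ENNReal.ofReal (GG l t z) ≤ C0)
    (hgB : ∀ᶠ k in atTop, ∫⁻ x, g k x ∂μ ≤ B) {δ : ℝ≥0∞} (hδ : δ ≠ 0) (hδt : δ ≠ ⊤) :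
    ∀ᶠ k in atTop, ∃ l t : ℝ, 0 < t ∧
      ∫⁻ x, ENNReal.ofReal (GG l t (w k x)) * g k x ∂μ ≤ (C0 + 1) * B ∧
      ∫⁻ x, ‖FF l t (w k x) - w k x‖ₑ ∂μ ≤ δ := by
  set ν : Measure ℝ := volume.restrict (Ioc (-1/2 : ℝ) (1/2)) with hν
  have hν1 : ν univ = 1 := by
    rw [hν, Measure.restrict_apply_univ, Real.volume_Ioc]; norm_num
  have : IsProbabilityMeasure ν := ⟨hν1⟩
  let t : ℕ → ℝ := fun k => 1 / ((k : ℝ) + 1)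
  have ht : ∀ k, 0 < t k := fun k => by positivity
  have htt : Tendsto t atTop (𝓝 0) := tendsto_one_div_add_atTop_nhds_zero_nat
  -- joint measurability
  have hpair : ∀ k, AEMeasurable (fun q : R2 × ℝ => (q.2, w k q.1)) (μ.prod ν) := fun k =>
    measurable_snd.aemeasurable.prodMk ((hw k).aemeasurable.comp_fst)
  have hm1 : ∀ k, AEMeasurable (fun q : R2 × ℝ => ‖FF q.2 (t k) (w k q.1) - w k q.1‖ₑ)
      (μ.prod ν) := fun k =>
    (((FF_cont (ht k)).measurable.comp_aemeasurable (hpair k)).sub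
      ((hw k).aemeasurable.comp_fst)).enorm
  have hm2 : ∀ k, AEMeasurable (fun q : R2 × ℝ => ENNReal.ofReal (GG q.2 (t k) (w k q.1)) * g k q.1)
      (μ.prod ν) := fun k =>
    (((GG_cont (ht k)).measurable.comp_aemeasurable (hpair k)).ennreal_ofReal).mul
      ((hg k).comp_fst)
  have hΨ : Tendsto (fun k => ∫⁻ x, ∫⁻ l, ‖FF l (t k) (w k x) - w k x‖ₑ ∂ν ∂μ) atTop (𝓝 0) := by
    have hb : ∀ k, ∀ᵐ x ∂μ, ∀ l, ‖FF l (t k) (w k x) - w k x‖ₑ ≤ 2 := by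
      intro k
      filter_upwards [hw1 k] with x hx l
      refine enorm_sub_le.trans ?_
      rw [show (2 : ℝ≥0∞) = 1 + 1 by norm_num]
      refine add_le_add ?_ ?_
      · rw [← ofReal_norm, norm_FF (ht k)]; simp
      · rw [← ofReal_norm]; exact ENNReal.ofReal_le_one.2 hx
    have h0 : (∫⁻ _ : R2, (0 : ℝ≥0∞) ∂μ) = 0 := by simp
    rw [← h0]
    refine tendsto_lintegral_of_dominated_convergence' (fun _ => 2) (fun k => ?_) (fun k => ?_)
      ?_ ?_
    · exact (hm1 k).lintegral_prod_right'
    · filter_upwards [hb k] with x hx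
      refine (lintegral_mono hx).trans ?_
      rw [lintegral_const, hν1, mul_one]
    · rw [lintegral_const]; exact ENNReal.mul_ne_top (by simp) (measure_ne_top _ _)
    · filter_upwards [ae_all_iff.2 hb, hW, hwW] with x hx hWx hx2
      have h00 : (∫⁻ _ : ℝ, (0 : ℝ≥0∞) ∂ν) = 0 := by simp
      rw [← h00]
      refine tendsto_lintegral_of_dominated_convergence' (fun _ => 2) (fun k => ?_) (fun k => ?_)
        ?_ ?_
      · have : Continuous fun l => FF l (t k) (w k x) - w k x :=
          ((FF_cont (ht k)).comp (continuous_id.prodMk continuous_const)).sub continuous_const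
        exact this.measurable.enorm.aemeasurable
      · exact Eventually.of_forall (hx k)
      · rw [lintegral_const, hν1]; simp
      · filter_upwards [ne_cc_ae (W x) ν] with l hl
        have h1 := (FF_tendsto hWx hl htt hx2).sub hx2
        rw [sub_self] at h1
        simpa using h1.enorm
  set M : ℝ≥0∞ := (C0 + 1) * B / δ with hM
  have hCB : (C0 + 1) * B ≠ ⊤ := ENNReal.mul_ne_top (by simp [hC0]) hB
  have hMt : M ≠ ⊤ := ENNReal.div_ne_top hCB hδ
  have hM0 : M ≠ 0 := (ENNReal.div_pos (mul_ne_zero (by simp) hB0) hδt).ne'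
  have hMΨ : Tendsto (fun k => M * ∫⁻ x, ∫⁻ l, ‖FF l (t k) (w k x) - w k x‖ₑ ∂ν ∂μ) atTop (𝓝 0) := by
    simpa using ENNReal.Tendsto.const_mul hΨ (Or.inr hMt)
  filter_upwards [hMΨ.eventually (Iic_mem_nhds (pos_iff_ne_zero.2 hB0)), hgB] with k hk1 hk2
  let Φ : ℝ → ℝ≥0∞ := fun l => ∫⁻ x, ENNReal.ofReal (GG l (t k) (w k x)) * g k x ∂μ
  let Ψ : ℝ → ℝ≥0∞ := fun l => ∫⁻ x, ‖FF l (t k) (w k x) - w k x‖ₑ ∂μ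
  have hΦm : AEMeasurable Φ ν := (hm2 k).lintegral_prod_left'
  have hΨm : AEMeasurable Ψ ν := (hm1 k).lintegral_prod_left'
  have hΦi : ∫⁻ l, Φ l ∂ν ≤ C0 * B := by
    have := lintegral_lintegral_swap
      (f := fun x l => ENNReal.ofReal (GG l (t k) (w k x)) * g k x) (hm2 k)
    change ∫⁻ l, ∫⁻ x, ENNReal.ofReal (GG l (t k) (w k x)) * g k x ∂μ ∂ν ≤ _
    rw [← this]
    calc ∫⁻ x, ∫⁻ l, ENNReal.ofReal (GG l (t k) (w k x)) * g k x ∂ν ∂μ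
        ≤ ∫⁻ x, C0 * g k x ∂μ := by
          refine lintegral_mono_ae ?_
          filter_upwards [hw1 k] with x hx
          rw [lintegral_mul_const]
          · gcongr; exact hC _ (ht k) _ hx
          · have : Continuous fun l => GG l (t k) (w k x) :=
              (GG_cont (ht k)).comp (continuous_id.prodMk continuous_const)
            exact this.measurable.ennreal_ofReal
      _ = C0 * ∫⁻ x, g k x ∂μ := lintegral_const_mul'' _ (hg k)
      _ ≤ C0 * B := by gcongr
  have hΨi : ∫⁻ l, M * Ψ l ∂ν ≤ B := by
    rw [lintegral_const_mul'' _ hΨm]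
    have := lintegral_lintegral_swap
      (f := fun x l => ‖FF l (t k) (w k x) - w k x‖ₑ) (hm1 k)
    change M * ∫⁻ l, ∫⁻ x, ‖FF l (t k) (w k x) - w k x‖ₑ ∂μ ∂ν ≤ _
    rw [← this]
    exact hk1
  have htot : ∫⁻ l, (Φ l + M * Ψ l) ∂ν ≤ (C0 + 1) * B := by
    rw [lintegral_add_left' hΦm, add_mul, one_mul]
    exact add_le_add hΦi hΨi
  obtain ⟨l, -, hl⟩ := exists_notMem_null_le_laverage (μ := ν) (N := ∅)
    (IsProbabilityMeasure.ne_zero ν) (hΦm.add (hΨm.const_mul M)) (by simp)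
  rw [laverage_eq, hν1, div_one] at hl
  have hl2 : Φ l + M * Ψ l ≤ (C0 + 1) * B := hl.trans htot
  refine ⟨l, t k, ht k, le_self_add.trans hl2, ?_⟩
  have h5 : M * Ψ l ≤ M * δ := by
    refine (le_add_self.trans hl2).trans ?_
    rw [hM, ENNReal.div_mul_cancel hδ hδt]
  exact (ENNReal.mul_le_mul_iff_right hM0 hMt).1 h5

lemma gr_norm_le_of {v w : R2 → ℂ} {x : R2} {K : ℝ} (hK : 0 ≤ K)
    (h : ∀ j, ‖gr v x j‖ ≤ K * ‖gr w x j‖) : ‖gr v x‖ ≤ K * ‖gr w x‖ := by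
  rw [EuclideanSpace.norm_eq, EuclideanSpace.norm_eq]
  rw [← Real.sqrt_sq hK, ← Real.sqrt_mul (by positivity)]
  apply Real.sqrt_le_sqrt
  rw [Finset.mul_sum]
  refine Finset.sum_le_sum fun j _ => ?_
  rw [← mul_pow]
  gcongr
  exact h j

lemma gr_conj {p : R2 → ℂ} {x : R2} (hp : DifferentiableAt ℝ p x) :
    ‖gr (fun y => (starRingEnd ℂ) (p y)) x‖ ≤ ‖gr p x‖ := by
  have := gr_norm_le_of (v := fun y => (starRingEnd ℂ) (p y)) (w := p) (x := x) zero_le_one ?_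
  · simpa using this
  intro j
  have h1 : HasFDerivAt (fun y => (starRingEnd ℂ) (p y))
      ((Complex.conjCLE : ℂ →L[ℝ] ℂ).comp (fderiv ℝ p x)) x :=
    (Complex.conjCLE : ℂ →L[ℝ] ℂ).hasFDerivAt.comp x hp.hasFDerivAt
  change ‖fderiv ℝ (fun y => (starRingEnd ℂ) (p y)) x _‖ ≤ 1 * ‖fderiv ℝ p x _‖
  rw [h1.fderiv]
  simp

lemma gr_FF {l t : ℝ} (ht : 0 < t) {w : R2 → ℂ} {x : R2} (hw : DifferentiableAt ℝ w x) :
    ‖gr (fun y => FF l t (w y)) x‖ ≤ GG l t (w x) * ‖gr w x‖ := by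
  refine gr_norm_le_of (GG_nonneg ht _) fun j => ?_
  have h1 : HasFDerivAt (fun y => FF l t (w y)) ((fderiv ℝ (FF l t) (w x)).comp (fderiv ℝ w x)) x :=
    (((FF_contDiff ht).differentiable (by norm_num)) (w x)).hasFDerivAt.comp x hw.hasFDerivAt
  change ‖fderiv ℝ (fun y => FF l t (w y)) x _‖ ≤ _ * ‖fderiv ℝ w x _‖
  rw [h1.fderiv]
  exact FF_fderiv ht _ _

lemma gr_sub {f g : R2 → ℂ} {x : R2} (hf : DifferentiableAt ℝ f x) (hg : DifferentiableAt ℝ g x) :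
    gr (fun y => f y - g y) x = gr f x - gr g x := by
  ext j
  change fderiv ℝ (fun y => f y - g y) x _ = fderiv ℝ f x _ - fderiv ℝ g x _
  rw [fderiv_fun_sub hf hg]; rfl

lemma gr_w {a p : R2 → ℂ} {x : R2} (ha : DifferentiableAt ℝ a x) (hp : DifferentiableAt ℝ p x)
    (h1 : ∀ᶠ y in 𝓝 x, ‖p y‖ = 1) :
    ‖gr (fun y => a y * (starRingEnd ℂ) (p y)) x‖ ≤ ‖a x - p x‖ * ‖gr p x‖ + ‖gr a x - gr p x‖ := by
  have hc : DifferentiableAt ℝ (fun y => (starRingEnd ℂ) (p y)) x :=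
    (Complex.conjCLE : ℂ →L[ℝ] ℂ).differentiableAt.comp x hp
  have e1 : (fun y => a y * (starRingEnd ℂ) (p y)) =ᶠ[𝓝 x]
      fun y => (a y - p y) * (starRingEnd ℂ) (p y) - (-1) := by
    filter_upwards [h1] with y hy
    have : p y * (starRingEnd ℂ) (p y) = 1 := by
      rw [Complex.mul_conj, Complex.normSq_eq_norm_sq, hy]; simp
    rw [sub_mul, this]; ring
  rw [gr_congr e1, gr_sub (f := fun y => (a y - p y) * (starRingEnd ℂ) (p y)) ((ha.sub hp).mul hc)
    (differentiableAt_const _), gr_const, sub_zero, gr_mul (f := fun y => a y - p y) (ha.sub hp) hc, gr_sub ha hp]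
  refine (norm_add_le _ _).trans ?_
  rw [norm_smul, norm_smul, RCLike.norm_conj, h1.self_of_nhds, one_mul]
  gcongr
  exact gr_conj hp

lemma sqrt_lip (a b : ℝ) (hb : 0 ≤ b) (h : ℝ) (hh : 0 ≤ h) (ha : 0 ≤ a) (hab : a ≤ h + b) :
    √(1 + a ^ 2) ≤ √(1 + h ^ 2) + b := by
  have h1 : 0 ≤ √(1 + h ^ 2) := Real.sqrt_nonneg _
  have h2 : √(1 + h ^ 2) ^ 2 = 1 + h ^ 2 := Real.sq_sqrt (by positivity)
  have h3 : h ≤ √(1 + h ^ 2) := Real.le_sqrt_of_sq_le (by linarith)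
  apply Real.sqrt_le_iff.2 ⟨by positivity, ?_⟩
  nlinarith [mul_le_mul_of_nonneg_right h3 hb]

def rv (v : R2 → ℂ) (x : R2) : R2 := !₂[(v x).re, (v x).im]

def cR : ℂ →L[ℝ] R2 :=
  LinearMap.toContinuousLinearMap
    { toFun := fun z => !₂[z.re, z.im]
      map_add' := fun a b => by ext i; fin_cases i <;> simp
      map_smul' := fun a b => by ext i; fin_cases i <;> simp }

lemma cR_apply (z : ℂ) : cR z = !₂[z.re, z.im] := rfl

lemma rv_contDiffOn {v : R2 → ℂ} {A : Set R2} (h : ContDiffOn ℝ 1 v A) : ContDiffOn ℝ 1 (rv v) A :=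
  cR.contDiff.comp_contDiffOn h

lemma rv_jac {v : R2 → ℂ} {x : R2} (hv : DifferentiableAt ℝ v x) (i j : Fin 2) :
    jacobianMatrix (rv v) x i j = ![(gr v x j).re, (gr v x j).im] i := by
  have h1 : HasFDerivAt (rv v) (cR.comp (fderiv ℝ v x)) x :=
    cR.hasFDerivAt.comp x hv.hasFDerivAt
  change fderiv ℝ (rv v) x (EuclideanSpace.single j 1) i = _
  rw [h1.fderiv]
  fin_cases i <;> rfl

lemma rv_integrand {v : R2 → ℂ} {x : R2} (hv : DifferentiableAt ℝ v x)
    (h1 : ∀ᶠ y in 𝓝 x, ‖v y‖ = 1) :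
    1 + (∑ i, ∑ j, jacobianMatrix (rv v) x i j ^ 2) + (jacobianMatrix (rv v) x).det ^ 2 =
      1 + ‖gr v x‖ ^ 2 := by
  have hd : (jacobianMatrix (rv v) x).det = 0 := by
    have key : ∀ j, (v x).re * (gr v x j).re + (v x).im * (gr v x j).im = 0 := by
      intro j
      have e : (fun y => ‖v y‖ ^ 2) =ᶠ[𝓝 x] fun _ => (1 : ℝ) := by
        filter_upwards [h1] with y hy; rw [hy]; norm_num
      have h2 := hv.hasFDerivAt.norm_sq
      have h3 := (h2.congr_of_eventuallyEq e.symm).unique (hasFDerivAt_const (1 : ℝ) x)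
      have h4 := congrArg (fun L => L (EuclideanSpace.single j (1 : ℝ))) h3
      have h5 : 2 * inner ℝ (v x) (gr v x j) = 0 := by
        have h6 : gr v x j = fderiv ℝ v x (EuclideanSpace.single j 1) := rfl
        rw [h6]
        simpa [two_smul, two_mul] using h4
      rw [Complex.inner] at h5
      simp at h5
      linarith
    rw [Matrix.det_fin_two]
    simp only [rv_jac hv]
    have n := h1.self_of_nhds
    have n2 : (v x).re ^ 2 + (v x).im ^ 2 = 1 := by
      have := Complex.sq_norm (v x)
      rw [n, Complex.normSq_apply] at this
      nlinarith
    have k0 := key 0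
    have k1 := key 1
    simp only [Matrix.cons_val_zero, Matrix.cons_val_one]
    generalize (gr v x 0).re = a at *
    generalize (gr v x 0).im = b at *
    generalize (gr v x 1).re = c at *
    generalize (gr v x 1).im = d at *
    generalize (v x).re = r at *
    generalize (v x).im = s at *
    linear_combination (-(a * d - c * b)) * n2 + (r * d - s * c) * k0 + (s * a - r * b) * k1
  rw [hd, EuclideanSpace.norm_eq, Real.sq_sqrt (by positivity)]
  simp only [rv_jac hv, Fin.sum_univ_two, Complex.sq_norm, Complex.normSq_apply]
  simp
  ring

lemma cG_sq (G : R2 → Matrix (Fin 2) (Fin 2) ℝ) (x : R2) :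
    ∑ i, ∑ j, (G x i j) ^ 2 = ‖cG G x‖ ^ 2 := by
  rw [EuclideanSpace.norm_eq, Real.sq_sqrt (by positivity)]
  simp only [Fin.sum_univ_two, Complex.sq_norm, Complex.normSq_apply, cG]
  ring

lemma relaxedArea_le_of {u : R2 → R2} {A : Set R2} {B : ℝ≥0∞}
    (hA : MeasurableSet A) (hu : IntegrableOn u A)
    (h : ∀ δ : ℝ≥0∞, δ ≠ 0 → δ ≠ ⊤ → ∃ v : R2 → R2, ContDiffOn ℝ 1 v A ∧
      ∫⁻ x in A, ‖v x - u x‖ₑ ≤ δ ∧ classicalArea A v ≤ B) : relaxedArea u A ≤ B := by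
  have hpos : ∀ k : ℕ, ENNReal.ofReal (1 / ((k : ℝ) + 1)) ≠ 0 := fun k => by
    rw [Ne, ENNReal.ofReal_eq_zero, not_le]; positivity
  choose v h1 h2 h3 using fun k : ℕ => h _ (hpos k) ENNReal.ofReal_ne_top
  have hIntg : ∀ k, IntegrableOn (fun x => v k x - u x) A := fun k =>
    ⟨((h1 k).continuousOn.aestronglyMeasurable hA).sub hu.1,
      (h2 k).trans_lt ENNReal.ofReal_lt_top⟩
  unfold relaxedArea
  refine le_trans (sInf_le (a := liminf (fun k => classicalArea A (v k)) atTop)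
    ⟨v, h1, hIntg, ?_, rfl⟩) ?_
  · refine squeeze_zero (fun k => integral_nonneg fun x => norm_nonneg _) (fun k => ?_)
      tendsto_one_div_add_atTop_nhds_zero_nat
    rw [integral_norm_eq_lintegral_enorm (hIntg k).1]
    exact ENNReal.toReal_le_of_le_ofReal (by positivity) (h2 k)
  · calc liminf (fun k => classicalArea A (v k)) atTop ≤ liminf (fun _ : ℕ => B) atTop :=
        liminf_le_liminf (Eventually.of_forall h3)
      _ = B := liminf_const _

lemma gr_meas (v : R2 → ℂ) : Measurable (gr v) :=
  (WithLp.measurable_toLp 2 _).comp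
    (measurable_pi_lambda _ fun j => measurable_fderiv_apply_const ℝ v _)

lemma rv_sub_enorm (v : R2 → ℂ) (u : R2 → R2) (x : R2) :
    ‖rv v x - u x‖ₑ = ‖v x - cu u x‖ₑ := by
  have h := norm_cu (fun y => rv v y - u y) x
  have e : cu (fun y => rv v y - u y) x = v x - cu u x := by
    apply Complex.ext <;> simp [cu, rv]
  rw [e] at h
  rw [← ofReal_norm, ← ofReal_norm, h]

lemma final_point {p w : R2 → ℂ} {H : E2} {l t : ℝ} (ht : 0 < t) {x : R2}
    (hp : DifferentiableAt ℝ p x) (hw : DifferentiableAt ℝ w x) (h1 : ∀ᶠ y in 𝓝 x, ‖p y‖ = 1) :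
    ENNReal.ofReal (√(1 + (∑ i, ∑ j, jacobianMatrix (rv fun y => p y * FF l t (w y)) x i j ^ 2)
      + (jacobianMatrix (rv fun y => p y * FF l t (w y)) x).det ^ 2)) ≤
    ENNReal.ofReal (√(1 + ‖H‖ ^ 2)) + (‖gr p x - H‖ₑ + ENNReal.ofReal (GG l t (w x)) * ‖gr w x‖ₑ) := by
  have hF : DifferentiableAt ℝ (fun y => FF l t (w y)) x :=
    (((FF_contDiff ht).differentiable (by norm_num)) (w x)).comp x hw
  rw [rv_integrand (v := fun y => p y * FF l t (w y)) (hp.mul hF)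
    (by filter_upwards [h1] with y hy; rw [norm_mul, hy, norm_FF ht, one_mul])]
  have hG := GG_nonneg (l := l) ht (w x)
  have hb : ‖gr (fun y => p y * FF l t (w y)) x‖ ≤
      ‖H‖ + (‖gr p x - H‖ + GG l t (w x) * ‖gr w x‖) := by
    rw [gr_mul hp hF]
    refine (norm_add_le _ _).trans ?_
    rw [norm_smul, norm_smul, h1.self_of_nhds, norm_FF ht, one_mul, one_mul]
    have e1 := gr_FF (l := l) ht hw
    have e2 : ‖gr p x‖ ≤ ‖H‖ + ‖gr p x - H‖ := by
      simpa using norm_add_le H (gr p x - H)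
    linarith
  have := sqrt_lip _ _ (by positivity) _ (norm_nonneg H) (norm_nonneg _) hb
  refine (ENNReal.ofReal_le_ofReal this).trans ?_
  rw [ENNReal.ofReal_add (by positivity) (by positivity),
    ENNReal.ofReal_add (by positivity) (by positivity), ENNReal.ofReal_mul hG,
    ofReal_norm, ofReal_norm]

theorem final_main {Ω : Set R2} (hΩo : IsOpen Ω)
    (hΩb : Bornology.IsBounded Ω) (hΩl : HasLipschitzBoundary Ω)
    {u : R2 → R2} {G : R2 → Matrix (Fin 2) (Fin 2) ℝ}
    (hu : MemW11 Ω u G) (hS : SphereValued Ω u) {ε : ℝ} (hε : 0 < ε) :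
    ∃ C : Set R2, C ⊆ Ω ∧ C.Finite ∧
      relaxedArea u (Ω \ C) ≤
        ENNReal.ofReal ((∫ x in Ω, Real.sqrt (1 + ∑ i, ∑ j, (G x i j) ^ 2)) + ε) := by
  obtain ⟨a, ha1, ha2, ha3, ha4⟩ := approx_seq hΩo hΩb hΩl hu hS
  obtain ⟨C0, hC0, hC⟩ := GG_bound
  set D : ℝ≥0∞ := 1 + (C0 + 1) * 3 with hD
  have hDt : D ≠ ⊤ := by
    simp [hD, ENNReal.mul_eq_top, hC0]
  have hD0 : D ≠ 0 := by simp [hD]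
  set e : ℝ≥0∞ := ENNReal.ofReal ε / D with he
  have he0 : e ≠ 0 := (ENNReal.div_pos (by simpa using hε) hDt).ne'
  have het : e ≠ ⊤ := ENNReal.div_ne_top ENNReal.ofReal_ne_top hD0
  have heD : D * e = ENNReal.ofReal ε := ENNReal.mul_div_cancel hD0 hDt
  obtain ⟨C, p, hCΩ, hCf, hp, hp1, hpH, hpU⟩ := proj_exists hΩo hΩb hu hS ha1 ha2 ha3 ha4 he0
  refine ⟨C, hCΩ, hCf, ?_⟩
  have hAo : IsOpen (Ω \ C) := hΩo.sdiff hCf.isClosed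
  have hres : volume.restrict Ω = volume.restrict (Ω \ C) :=
    (Measure.restrict_congr_set (sdiff_null_ae_eq_self (hCf.measure_zero volume))).symm
  have hHi : IntegrableOn (cG G) Ω := cG_integrable hu.2.1
  have hUi : IntegrableOn (cu u) Ω := cu_integrable hu.1
  have hfin : IsFiniteMeasure (volume.restrict Ω) :=
    ⟨by rw [Measure.restrict_apply_univ]; exact hΩb.measure_lt_top⟩
  -- right-hand side
  have hR : ENNReal.ofReal ((∫ x in Ω, Real.sqrt (1 + ∑ i, ∑ j, (G x i j) ^ 2)) + ε) =
      (∫⁻ x in Ω, ENNReal.ofReal (√(1 + ‖cG G x‖ ^ 2))) + D * e := by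
    simp only [cG_sq]
    rw [ENNReal.ofReal_add (integral_nonneg fun x => Real.sqrt_nonneg _) hε.le, heD,
      ofReal_integral_eq_lintegral_ofReal _ (Eventually.of_forall fun x => Real.sqrt_nonneg _)]
    refine Integrable.mono' ((integrable_const (1 : ℝ)).add hHi.norm) ?_ ?_
    · exact (Real.continuous_sqrt.comp (continuous_const.add (continuous_norm.pow 2))).comp_aestronglyMeasurable hHi.1
    · refine Eventually.of_forall fun x => ?_
      rw [Real.norm_of_nonneg (Real.sqrt_nonneg _)]
      refine Real.sqrt_le_iff.2 ⟨?_, ?_⟩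
      · simp only [Pi.add_apply]; positivity
      · simp only [Pi.add_apply]; nlinarith [norm_nonneg (cG G x)]
  rw [hR]
  unfold SphereValued at hS
  rw [IntegrableOn, hres] at hHi hUi
  have hui : IntegrableOn u (Ω \ C) := hu.1.mono_set sdiff_subset
  rw [hres] at ha3 ha4 hpH hpU hfin hS ⊢
  set μ : Measure R2 := volume.restrict (Ω \ C) with hμ
  have hmem : ∀ᵐ x ∂μ, x ∈ Ω \ C := ae_restrict_mem hAo.measurableSet
  have hpd : ∀ x ∈ Ω \ C, DifferentiableAt ℝ p x := fun x hx =>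
    (hp.contDiffAt (hAo.mem_nhds hx)).differentiableAt (by norm_num)
  have hpe : ∀ x ∈ Ω \ C, ∀ᶠ y in 𝓝 x, ‖p y‖ = 1 := fun x hx => by
    filter_upwards [hAo.mem_nhds hx] with y hy using hp1 y hy
  have had : ∀ n x, DifferentiableAt ℝ (a n) x := fun n x =>
    ((ha1 n).differentiable (by simp)) x
  have hU1 : ∀ᵐ x ∂μ, ‖cu u x‖ = 1 := by
    filter_upwards [hS] with x hx; rw [norm_cu, hx]
  have hgpt : ∫⁻ x, ‖gr p x‖ₑ ∂μ ≠ ⊤ := by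
    have : ∫⁻ x, ‖gr p x‖ₑ ∂μ ≤ ∫⁻ x, (‖gr p x - cG G x‖ₑ + ‖cG G x‖ₑ) ∂μ := by
      refine lintegral_mono fun x => ?_
      simpa using enorm_add_le (gr p x - cG G x) (cG G x)
    rw [lintegral_add_right' _ hHi.1.enorm] at this
    exact (this.trans_lt (ENNReal.add_lt_top.2 ⟨hpH.trans_lt het.lt_top, hHi.2⟩)).ne
  have hb2 : ∀ n, ∀ᵐ x ∂μ, ‖a n x - cu u x‖ₑ ≤ 2 := by
    intro n
    filter_upwards [hU1] with x hx
    refine enorm_sub_le.trans ?_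
    rw [show (2 : ℝ≥0∞) = 1 + 1 by norm_num]
    refine add_le_add ?_ ?_
    · rw [← ofReal_norm]; exact ENNReal.ofReal_le_one.2 (ha2 n x)
    · rw [← ofReal_norm, hx]; simp
  have hdm : ∀ n, AEMeasurable (fun x => ‖a n x - cu u x‖ₑ) μ := fun n =>
    ((ha1 n).continuous.aestronglyMeasurable.sub hUi.1).enorm
  have hd0 : ∀ᵐ x ∂μ, Tendsto (fun n => ‖a n x - cu u x‖ₑ) atTop (𝓝 0) := by
    filter_upwards [ha3] with x hx
    have := (hx.sub_const (cu u x)).enorm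
    simpa using this
  have hT1 : Tendsto (fun n => ∫⁻ x, ‖a n x - cu u x‖ₑ ∂μ) atTop (𝓝 0) := by
    have h0 : (∫⁻ _ : R2, (0 : ℝ≥0∞) ∂μ) = 0 := by simp
    rw [← h0]
    refine tendsto_lintegral_of_dominated_convergence' (fun _ => 2) hdm hb2 ?_ hd0
    rw [lintegral_const]; exact ENNReal.mul_ne_top (by simp) (measure_ne_top _ _)
  have hT2 : Tendsto (fun n => ∫⁻ x, ‖a n x - cu u x‖ₑ * ‖gr p x‖ₑ ∂μ) atTop (𝓝 0) := by
    have h0 : (∫⁻ _ : R2, (0 : ℝ≥0∞) ∂μ) = 0 := by simp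
    rw [← h0]
    refine tendsto_lintegral_of_dominated_convergence' (fun x => 2 * ‖gr p x‖ₑ)
      (fun n => (hdm n).mul (gr_meas p).enorm.aemeasurable) (fun n => ?_) ?_ ?_
    · filter_upwards [hb2 n] with x hx
      gcongr
    · rw [lintegral_const_mul _ (gr_meas p).enorm]
      exact ENNReal.mul_ne_top (by simp) hgpt
    · filter_upwards [hd0] with x hx
      simpa using ENNReal.Tendsto.mul_const hx (Or.inr (by simp : ‖gr p x‖ₑ ≠ ⊤))
  let w : ℕ → R2 → ℂ := fun n x => a n x * (starRingEnd ℂ) (p x)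
  have hwc : ∀ n, ContDiffOn ℝ 1 (w n) (Ω \ C) := fun n =>
    ((ha1 n).of_le (by exact_mod_cast le_top)).contDiffOn.mul
      ((Complex.conjCLE : ℂ →L[ℝ] ℂ).contDiff.comp_contDiffOn hp)
  have hwd : ∀ n, ∀ x ∈ Ω \ C, DifferentiableAt ℝ (w n) x := fun n x hx =>
    ((hwc n).contDiffAt (hAo.mem_nhds hx)).differentiableAt (by norm_num)
  have hw1 : ∀ n, ∀ᵐ x ∂μ, ‖w n x‖ ≤ 1 := fun n => by
    filter_upwards [hmem] with x hx
    change ‖a n x * (starRingEnd ℂ) (p x)‖ ≤ 1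
    rw [norm_mul, RCLike.norm_conj, hp1 x hx, mul_one]
    exact ha2 n x
  have hW1 : ∀ᵐ x ∂μ, ‖cu u x * (starRingEnd ℂ) (p x)‖ = 1 := by
    filter_upwards [hmem, hU1] with x hx hx2
    rw [norm_mul, RCLike.norm_conj, hp1 x hx, mul_one, hx2]
  have hwW : ∀ᵐ x ∂μ, Tendsto (fun k => w k x) atTop (𝓝 (cu u x * (starRingEnd ℂ) (p x))) := by
    filter_upwards [ha3] with x hx using hx.mul_const _
  have hgB : ∀ᶠ k in atTop, ∫⁻ x, ‖gr (w k) x‖ₑ ∂μ ≤ 3 * e := by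
    have hT3 := hT2.add ha4
    rw [add_zero] at hT3
    filter_upwards [hT3.eventually (Iic_mem_nhds (pos_iff_ne_zero.2 he0))] with k hk
    have hk' : ∫⁻ x, ‖a k x - cu u x‖ₑ * ‖gr p x‖ₑ ∂μ + ∫⁻ x, ‖gr (a k) x - cG G x‖ₑ ∂μ ≤ e := hk
    calc ∫⁻ x, ‖gr (w k) x‖ₑ ∂μ
        ≤ ∫⁻ x, ((‖a k x - cu u x‖ₑ * ‖gr p x‖ₑ + ‖cu u x - p x‖ₑ * ‖gr p x‖ₑ)
            + (‖gr (a k) x - cG G x‖ₑ + ‖gr p x - cG G x‖ₑ)) ∂μ := by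
          refine lintegral_mono_ae ?_
          filter_upwards [hmem] with x hx
          have h1 := gr_w (had k x) (hpd x hx) (hpe x hx)
          have h2 : ‖gr (w k) x‖ₑ ≤ ‖a k x - p x‖ₑ * ‖gr p x‖ₑ + ‖gr (a k) x - gr p x‖ₑ := by
            have := ENNReal.ofReal_le_ofReal h1
            rw [ENNReal.ofReal_add (by positivity) (by positivity),
              ENNReal.ofReal_mul (by positivity)] at this
            simpa only [ofReal_norm] using this
          refine h2.trans (add_le_add ?_ ?_)
          · rw [← add_mul]
            gcongr
            simpa using enorm_add_le (a k x - cu u x) (cu u x - p x)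
          · have := enorm_sub_le (a := gr (a k) x - cG G x) (b := gr p x - cG G x)
            simpa using this
      _ = (∫⁻ x, ‖a k x - cu u x‖ₑ * ‖gr p x‖ₑ ∂μ + ∫⁻ x, ‖cu u x - p x‖ₑ * ‖gr p x‖ₑ ∂μ)
            + (∫⁻ x, ‖gr (a k) x - cG G x‖ₑ ∂μ + ∫⁻ x, ‖gr p x - cG G x‖ₑ ∂μ) := by
          have m1 : AEMeasurable (fun x => ‖a k x - cu u x‖ₑ * ‖gr p x‖ₑ) μ :=
            (hdm k).mul (gr_meas p).enorm.aemeasurable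
          have m2 : AEMeasurable (fun x => ‖gr (a k) x - cG G x‖ₑ) μ :=
            ((gr_meas (a k)).aemeasurable.sub hHi.1.aemeasurable).enorm
          have m3 : AEMeasurable (fun x => ‖gr p x - cG G x‖ₑ) μ :=
            ((gr_meas p).aemeasurable.sub hHi.1.aemeasurable).enorm
          have m23 : AEMeasurable (fun x => ‖gr (a k) x - cG G x‖ₑ + ‖gr p x - cG G x‖ₑ) μ :=
            m2.add m3
          rw [lintegral_add_right' _ m23, lintegral_add_left' m1, lintegral_add_left' m2]
      _ = (∫⁻ x, ‖a k x - cu u x‖ₑ * ‖gr p x‖ₑ ∂μ + ∫⁻ x, ‖gr (a k) x - cG G x‖ₑ ∂μ)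
            + (∫⁻ x, ‖cu u x - p x‖ₑ * ‖gr p x‖ₑ ∂μ + ∫⁻ x, ‖gr p x - cG G x‖ₑ ∂μ) := by ring
      _ ≤ e + (e + e) := add_le_add hk' (add_le_add hpU hpH)
      _ = 3 * e := by ring
  refine relaxedArea_le_of hAo.measurableSet hui fun δ hδ hδt => ?_
  have hδ2 : δ / 2 ≠ 0 := (ENNReal.half_pos hδ).ne'
  have hδ2t : δ / 2 ≠ ⊤ := ENNReal.div_ne_top hδt (by simp)
  have hev := avg_select (μ := μ) (fun k => (hwc k).continuousOn.aestronglyMeasurable hAo.measurableSet)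
    hw1 hW1 hwW (fun k => (gr_meas (w k)).enorm.aemeasurable) (B := 3 * e)
    (mul_ne_zero (by simp) he0) (ENNReal.mul_ne_top (by simp) het) hC0 hC hgB hδ2 hδ2t
  obtain ⟨k, ⟨l, t, ht, hΦ, hΨ⟩, hk⟩ :=
    (hev.and (hT1.eventually (Iic_mem_nhds (pos_iff_ne_zero.2 hδ2)))).exists
  refine ⟨rv fun y => p y * FF l t (w k y), ?_, ?_, ?_⟩
  · exact rv_contDiffOn (hp.mul ((FF_contDiff ht).comp_contDiffOn (hwc k)))
  · change ∫⁻ x, _ ∂μ ≤ δ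
    calc ∫⁻ x, ‖rv (fun y => p y * FF l t (w k y)) x - u x‖ₑ ∂μ
        ≤ ∫⁻ x, (‖FF l t (w k x) - w k x‖ₑ + ‖a k x - cu u x‖ₑ) ∂μ := by
          refine lintegral_mono_ae ?_
          filter_upwards [hmem] with x hx
          rw [rv_sub_enorm]
          have h1 : p x * (starRingEnd ℂ) (p x) = 1 := by
            rw [Complex.mul_conj, Complex.normSq_eq_norm_sq, hp1 x hx]; simp
          have h2 : p x * FF l t (w k x) - cu u x =
              p x * (FF l t (w k x) - w k x) + (a k x - cu u x) := by
            have : p x * w k x = a k x := by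
              change p x * (a k x * (starRingEnd ℂ) (p x)) = a k x
              linear_combination a k x * h1
            rw [mul_sub, this]; ring
          rw [h2]
          refine (enorm_add_le _ _).trans ?_
          gcongr
          rw [← ofReal_norm, norm_mul, hp1 x hx, one_mul, ofReal_norm]
      _ = ∫⁻ x, ‖FF l t (w k x) - w k x‖ₑ ∂μ + ∫⁻ x, ‖a k x - cu u x‖ₑ ∂μ :=
          lintegral_add_right' _ (hdm k)
      _ ≤ δ / 2 + δ / 2 := add_le_add hΨ hk
      _ = δ := ENNReal.add_halves δ
  · unfold classicalArea
    have m3 : AEMeasurable (fun x => ‖gr p x - cG G x‖ₑ) μ :=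
      ((gr_meas p).aemeasurable.sub hHi.1.aemeasurable).enorm
    have m4 : AEMeasurable (fun x => ENNReal.ofReal (√(1 + ‖cG G x‖ ^ 2))) μ :=
      ((Real.continuous_sqrt.comp (continuous_const.add
        (continuous_norm.pow 2))).comp_aestronglyMeasurable hHi.1).aemeasurable.ennreal_ofReal
    calc _ ≤ ∫⁻ x, (ENNReal.ofReal (√(1 + ‖cG G x‖ ^ 2)) + (‖gr p x - cG G x‖ₑ +
            ENNReal.ofReal (GG l t (w k x)) * ‖gr (w k) x‖ₑ)) ∂μ := by
          refine lintegral_mono_ae ?_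
          filter_upwards [hmem] with x hx
          exact final_point ht (hpd x hx) (hwd k x hx) (hpe x hx)
      _ = ∫⁻ x, ENNReal.ofReal (√(1 + ‖cG G x‖ ^ 2)) ∂μ + (∫⁻ x, ‖gr p x - cG G x‖ₑ ∂μ +
            ∫⁻ x, ENNReal.ofReal (GG l t (w k x)) * ‖gr (w k) x‖ₑ ∂μ) := by
          rw [lintegral_add_left' m4, lintegral_add_left' m3]
      _ ≤ ∫⁻ x, ENNReal.ofReal (√(1 + ‖cG G x‖ ^ 2)) ∂μ + (e + (C0 + 1) * (3 * e)) := by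
          gcongr
      _ = _ := by rw [hD]; ring

/-- **Theorem (removal of finitely many points).** For `u ∈ W^{1,1}(Ω;S¹)` and
every `ε > 0` there is a finite set `C_ε ⊂ Ω` with
`𝒜(u,Ω∖C_ε) ≤ ∫_Ω √(1+|∇u|²) dx + ε`. -/
theorem exists_finite_removal_relaxedArea_le (Ω : Set R2) (hΩo : IsOpen Ω)
    (hΩb : Bornology.IsBounded Ω) (hΩc : IsConnected Ω) (hΩl : HasLipschitzBoundary Ω)
    (u : R2 → R2) (G : R2 → Matrix (Fin 2) (Fin 2) ℝ)
    (hu : MemW11 Ω u G) (hS : SphereValued Ω u) :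
    ∀ ε : ℝ, 0 < ε → ∃ C : Set R2, C ⊆ Ω ∧ C.Finite ∧
      relaxedArea u (Ω \ C) ≤
        ENNReal.ofReal ((∫ x in Ω, Real.sqrt (1 + ∑ i, ∑ j, (G x i j) ^ 2)) + ε) := by
  intro ε hε
  exact final_main hΩo hΩb hΩl hu hS hε
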